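/- arXiv:2209.01581 — 5 statements merged into one kernel-verified Lean document; each statement's English description precedes it below -/
import Mathlib

section
/- Let k be an algebraically closed field of characteristic zero, B a finitely generated k-algebra that is an integral domain, K the algebraic closure of Frac(B), and f ∈ B[x] a monic polynomial. Let R be a finitely generated B[x]_f-algebra containing B[x]_f that is flat as a B[x]_f-module and such that R ⊗_{B[x]_f} K(x) is an integral domain (the tensor product formed along the inclusion B[x]_f ⊆ K(x)). Then there exists a nonzero a ∈ B such that for every k-algebra homomorphism c : B → k with c(a) ≠ 0, the ring R ⊗_{B[x]_f} k(x) is an integral domain, where the tensor product is formed along the extension of c to B[x]_f → k(x) determined by c(x) = x. -/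
open scoped TensorProduct

/-! By generic freeness, `R` becomes flat over `B[x]` after inverting some `g ≠ 0` in `B[x]`, and
inverting `g` does not affect `κ(x) ⊗_{B[x]} R` as long as `g` does not vanish in `κ[x]`. For flat
`R`, the ring `κ(x) ⊗_{B[x]} R` is a localization of `κ ⊗_B R` at nonzerodivisors, so it remains to
see that if `A` is flat and of finite type over `B` and `K ⊗_B A` is a domain, then so is `κ ⊗_B A`
for `κ` over a nonempty open set.

By the primitive element theorem, `A` agrees after inverting one element `s` with a hypersurface
`B[x₁, …, xₙ] / (g)`, and `K ⊗_B A` being a domain makes `g` irreducible over `K`. Factorizations of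
`g` of lower degree are the solutions of a polynomial system over `B` in the unknown coefficients.
Having no solution in the algebraically closed field `K`, the system generates an ideal that
contains a nonzero constant `a ∈ B`, so `g` stays irreducible wherever `a` and a top-degree
coefficient of `g` do not vanish (the Bertini–Noether theorem). Finally, generic freeness of
`A / (s)` keeps `s` regular in the fibres, so `κ ⊗_B A` embeds into a localization of the domain
`κ[x₁, …, xₙ] / (g)`. -/

universe w

section Nullstellensatz

variable {B K : Type*} [CommRing B] [IsDomain B] [Field K] [Algebra B K] [FaithfulSMul B K]

variable (B K) in
theorem flat_field_of_faithfulSMul : Module.Flat B K := by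
  let : Algebra (FractionRing B) K := FractionRing.liftAlgebra B K
  have : Module.Flat B (FractionRing B) := IsLocalization.flat _ (nonZeroDivisors B)
  exact Module.Flat.trans B (FractionRing B) K

variable (B K) in
theorem nonempty_algHom_of_isAlgClosed [IsAlgClosed K] (D : Type*) [CommRing D] [Algebra B D]
    [FaithfulSMul B D] [Algebra.FiniteType B D] : Nonempty (D →ₐ[B] K) := by
  have : Module.Flat B K := flat_field_of_faithfulSMul B K
  have : Nontrivial (K ⊗[B] D) := (Algebra.TensorProduct.includeLeft_injective (S := B) (A := K)
    (FaithfulSMul.algebraMap_injective B D)).nontrivial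
  obtain ⟨M, hM⟩ := Ideal.exists_maximal (K ⊗[B] D)
  let : Field ((K ⊗[B] D) ⧸ M) := Ideal.Quotient.field M
  have : Module.Finite K ((K ⊗[B] D) ⧸ M) := finite_of_finite_type_of_isJacobsonRing K _
  have : Algebra.IsIntegral K ((K ⊗[B] D) ⧸ M) := inferInstance
  let e : ((K ⊗[B] D) ⧸ M) →ₐ[K] K := IsAlgClosed.lift
  exact ⟨((e.comp (Ideal.Quotient.mkₐ K M)).restrictScalars B).comp
    Algebra.TensorProduct.includeRight⟩

variable (K) in
theorem exists_ne_zero_C_mem [IsAlgClosed K] {ι : Type*} [Finite ι] (J : Ideal (MvPolynomial ι B))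
    (hJ : ∀ v : ι → K, ∃ p ∈ J, MvPolynomial.aeval v p ≠ 0) :
    ∃ a : B, a ≠ 0 ∧ MvPolynomial.C a ∈ J := by
  by_contra! h
  have hinj : Function.Injective (algebraMap B (MvPolynomial ι B ⧸ J)) := by
    rw [injective_iff_map_eq_zero]
    intro a ha
    by_contra ha0
    exact h a ha0 (Ideal.Quotient.eq_zero_iff_mem.mp ha)
  have := (faithfulSMul_iff_algebraMap_injective B (MvPolynomial ι B ⧸ J)).mpr hinj
  obtain ⟨φ⟩ := nonempty_algHom_of_isAlgClosed B K (MvPolynomial ι B ⧸ J)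
  let ψ : MvPolynomial ι B →ₐ[B] K := φ.comp (Ideal.Quotient.mkₐ B J)
  obtain ⟨p, hp, hp0⟩ := hJ (ψ ∘ MvPolynomial.X)
  rw [← MvPolynomial.aeval_unique ψ] at hp0
  exact hp0 (by simp [ψ, Ideal.Quotient.eq_zero_iff_mem.mpr hp])

end Nullstellensatz

section BertiniNoether

open MvPolynomial

variable {σ : Type*}

/-- The polynomial supported in the finite set of exponents `s` with prescribed coefficients `u`.
Taking variables for the coefficients gives the generic polynomial with support in `s`. -/
noncomputable def polynomialOfCoeffs {R : Type*} [CommSemiring R] (s : Finset (σ →₀ ℕ))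
    (u : s → R) : MvPolynomial σ R :=
  ∑ m : s, monomial m.1 (u m)

section polynomialOfCoeffs

variable {R S : Type*} [CommSemiring R] [CommSemiring S] {s : Finset (σ →₀ ℕ)}

theorem map_polynomialOfCoeffs (φ : R →+* S) (u : s → R) :
    map φ (polynomialOfCoeffs s u) = polynomialOfCoeffs s (φ ∘ u) := by
  simp [polynomialOfCoeffs]

theorem support_polynomialOfCoeffs_subset (u : s → R) : (polynomialOfCoeffs s u).support ⊆ s := by
  classical
  refine support_sum.trans (Finset.biUnion_subset.mpr fun m _ => ?_)
  exact support_monomial_subset.trans (Finset.singleton_subset_iff.mpr m.2)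

theorem polynomialOfCoeffs_coeff {p : MvPolynomial σ R} (hp : p.support ⊆ s) :
    polynomialOfCoeffs s (fun m => coeff m.1 p) = p := by
  rw [polynomialOfCoeffs, Finset.sum_coe_sort s fun m => monomial m (coeff m p)]
  conv_rhs => rw [p.as_sum]
  exact (Finset.sum_subset hp fun m _ hm => by simp [notMem_support_iff.mp hm]).symm

end polynomialOfCoeffs

theorem support_subset_degree_lt_iff {R : Type*} [CommSemiring R] [Finite σ] {n : ℕ} (hn : 0 < n)
    {p : MvPolynomial σ R} :
    p.support ⊆ (Finsupp.finite_of_degree_lt (σ := σ) n).toFinset ↔ p.totalDegree < n := by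
  simp [totalDegree, Finset.sup_lt_iff (show ⊥ < n from hn), Finset.subset_iff,
    Finsupp.degree_apply, Finsupp.sum]

theorem exists_coeff_ne_zero_totalDegree_map {R : Type*} [CommSemiring R] {g : MvPolynomial σ R}
    (hg : g ≠ 0) : ∃ b : R, b ≠ 0 ∧ ∀ (S : Type w) [CommSemiring S] (c : R →+* S), c b ≠ 0 →
      (map c g).totalDegree = g.totalDegree := by
  obtain ⟨m, hm, hmg⟩ := Finset.exists_mem_eq_sup g.support (support_nonempty.mpr hg)
    fun m => m.sum fun _ e => e
  refine ⟨coeff m g, mem_support_iff.mp hm, fun S _ c hc => ?_⟩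
  refine le_antisymm (Finset.sup_mono (support_map_subset _ _)) ?_
  exact hmg.trans_le (le_totalDegree (by rwa [mem_support_iff, coeff_map]))

theorem irreducible_iff_forall_mul_ne {κ : Type*} [Field κ] {p : MvPolynomial σ κ}
    (hp : 0 < p.totalDegree) : Irreducible p ↔
      ∀ q r, q.totalDegree < p.totalDegree → r.totalDegree < p.totalDegree → q * r ≠ p := by
  have hp0 : p ≠ 0 := by rintro rfl; simp at hp
  have isUnit_iff {q : MvPolynomial σ κ} (hq : q ≠ 0) : IsUnit q ↔ q.totalDegree = 0 := by
    refine ⟨fun h => (isUnit_iff_totalDegree_of_isReduced.mp h).2, fun h => ?_⟩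
    rw [totalDegree_eq_zero_iff_eq_C] at h
    rw [h] at hq ⊢
    exact (isUnit_iff_ne_zero.mpr (C_ne_zero.mp hq)).map C
  constructor
  · rintro h q r hq hr rfl
    have hdeg := totalDegree_mul_of_isDomain (left_ne_zero_of_mul hp0) (right_ne_zero_of_mul hp0)
    rcases h.isUnit_or_isUnit rfl with hu | hu
    · have := (isUnit_iff (left_ne_zero_of_mul hp0)).mp hu
      omega
    · have := (isUnit_iff (right_ne_zero_of_mul hp0)).mp hu
      omega
  · refine fun h => ⟨fun hu => hp.ne' ((isUnit_iff hp0).mp hu), fun q r hqr => ?_⟩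
    have hq0 : q ≠ 0 := left_ne_zero_of_mul (hqr ▸ hp0)
    have hr0 : r ≠ 0 := right_ne_zero_of_mul (hqr ▸ hp0)
    have hdeg := totalDegree_mul_of_isDomain hq0 hr0
    rw [← hqr] at hdeg
    rw [isUnit_iff hq0, isUnit_iff hr0]
    by_contra! hu
    exact h q r (by omega) (by omega) hqr.symm

section factorizationIdeal

variable {B S : Type*} [CommRing B] [CommRing S]

/-- The ideal whose zeros are the coefficients of the factorizations of `g` into a factor supported
in `s` and a factor supported in `t`, see `factorizationIdeal_le_ker_iff`. -/
noncomputable def factorizationIdeal (s t : Finset (σ →₀ ℕ)) (g : MvPolynomial σ B) :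
    Ideal (MvPolynomial (s ⊕ t) B) :=
  Ideal.span (Set.range fun m => coeff m
    (polynomialOfCoeffs s (X ∘ Sum.inl) * polynomialOfCoeffs t (X ∘ Sum.inr) - map C g))

theorem factorizationIdeal_le_ker_iff {s t : Finset (σ →₀ ℕ)} {g : MvPolynomial σ B}
    (c : B →+* S) (v : s ⊕ t → S) :
    factorizationIdeal s t g ≤ RingHom.ker (eval₂Hom c v) ↔
      polynomialOfCoeffs s (v ∘ Sum.inl) * polynomialOfCoeffs t (v ∘ Sum.inr) = map c g := by
  have hc : (eval₂Hom c v).comp C = c := RingHom.ext fun b => eval₂Hom_C c v b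
  have hX {ι : Type _} (i : ι → s ⊕ t) : eval₂Hom c v ∘ X ∘ i = v ∘ i := by
    ext1; simp
  simp only [factorizationIdeal, Ideal.span_le, Set.range_subset_iff, SetLike.mem_coe,
    RingHom.mem_ker, ← coeff_map]
  rw [map_sub, map_mul, map_polynomialOfCoeffs, map_polynomialOfCoeffs, map_map, hc, hX, hX,
    ← sub_eq_zero, MvPolynomial.ext_iff]
  simp only [coeff_zero]

end factorizationIdeal

variable {B : Type*} (K : Type*) [CommRing B] [IsDomain B] [Field K] [IsAlgClosed K] [Algebra B K]
  [FaithfulSMul B K]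

theorem exists_ne_zero_forall_mul_ne_map (s t : Finset (σ →₀ ℕ)) (g : MvPolynomial σ B)
    (hg : ∀ p q : MvPolynomial σ K, p.support ⊆ s → q.support ⊆ t →
      p * q ≠ map (algebraMap B K) g) :
    ∃ a : B, a ≠ 0 ∧ ∀ (S : Type w) [CommRing S] (c : B →+* S), c a ≠ 0 →
      ∀ p q : MvPolynomial σ S, p.support ⊆ s → q.support ⊆ t → p * q ≠ map c g := by
  obtain ⟨a, ha, haJ⟩ := exists_ne_zero_C_mem K (factorizationIdeal s t g) fun v => by
    by_contra! h
    exact hg _ _ (support_polynomialOfCoeffs_subset _) (support_polynomialOfCoeffs_subset _)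
      ((factorizationIdeal_le_ker_iff (algebraMap B K) v).mp h)
  refine ⟨a, ha, fun S _ c hca p q hp hq hpq => hca ?_⟩
  have hJ := (factorizationIdeal_le_ker_iff (s := s) (t := t) (g := g) c
    (Sum.elim (fun m => coeff m.1 p) fun m => coeff m.1 q)).mpr (by
      rw [Sum.elim_comp_inl, Sum.elim_comp_inr, polynomialOfCoeffs_coeff hp,
        polynomialOfCoeffs_coeff hq, hpq])
  simpa using hJ haJ

theorem exists_ne_zero_forall_irreducible_map [Finite σ] (g : MvPolynomial σ B)
    (hg : Irreducible (map (algebraMap B K) g)) :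
    ∃ a : B, a ≠ 0 ∧ ∀ (κ : Type w) [Field κ] (c : B →+* κ), c a ≠ 0 → Irreducible (map c g) := by
  have hg0 : g ≠ 0 := by rintro rfl; simp at hg
  have hdegK : (map (algebraMap B K) g).totalDegree = g.totalDegree := by
    simp only [totalDegree, support_map_of_injective _ (FaithfulSMul.algebraMap_injective B K)]
  have hpos : 0 < g.totalDegree := by
    by_contra! h0
    rw [← hdegK, Nat.le_zero, totalDegree_eq_zero_iff_eq_C] at h0
    rw [h0] at hg
    exact hg.not_isUnit ((isUnit_iff_ne_zero.mpr (C_ne_zero.mp hg.ne_zero)).map C)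
  rw [irreducible_iff_forall_mul_ne (hdegK ▸ hpos), hdegK] at hg
  obtain ⟨a, ha, hmul⟩ := exists_ne_zero_forall_mul_ne_map.{w} K
    (Finsupp.finite_of_degree_lt g.totalDegree).toFinset
    (Finsupp.finite_of_degree_lt g.totalDegree).toFinset g
    (by simpa only [support_subset_degree_lt_iff hpos] using fun p q hp hq => hg p q hp hq)
  obtain ⟨b, hb, hdeg⟩ := exists_coeff_ne_zero_totalDegree_map.{w} hg0
  refine ⟨a * b, mul_ne_zero ha hb, fun κ _ c hc => ?_⟩
  rw [map_mul] at hc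
  have hdegκ := hdeg κ c (right_ne_zero_of_mul hc)
  rw [irreducible_iff_forall_mul_ne (hdegκ ▸ hpos), hdegκ]
  simpa only [support_subset_degree_lt_iff hpos] using hmul κ c (left_ne_zero_of_mul hc)

end BertiniNoether

section GenericFreeness

open MvPolynomial

variable {σ R S : Type*} [CommRing R] [CommRing S]

theorem degree_map_of_injective (m : MonomialOrder σ) {φ : R →+* S} (hφ : Function.Injective φ)
    (p : MvPolynomial σ R) : m.degree (map φ p) = m.degree p := by
  simp only [MonomialOrder.degree, support_map_of_injective _ hφ]

theorem leadingCoeff_map_of_injective (m : MonomialOrder σ) {φ : R →+* S}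
    (hφ : Function.Injective φ) (p : MvPolynomial σ R) :
    m.leadingCoeff (map φ p) = φ (m.leadingCoeff p) := by
  simp only [MonomialOrder.leadingCoeff, degree_map_of_injective m hφ, coeff_map]

variable [Algebra R S]

/-- Extension of scalars of a quotient of a polynomial ring. -/
noncomputable def tensorMvPolynomialQuotientEquiv (I : Ideal (MvPolynomial σ R)) :
    S ⊗[R] (MvPolynomial σ R ⧸ I) ≃ₐ[S] MvPolynomial σ S ⧸ I.map (map (algebraMap R S)) :=
  (Algebra.TensorProduct.tensorQuotientEquiv S _ S I).trans <|
    Ideal.quotientEquivAlg _ _ (algebraTensorAlgEquiv R S) <| by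
      trans (I.map (Algebra.TensorProduct.includeRight (A := S) (R := R)).toRingHom).map
        (algebraTensorAlgEquiv R S).toRingHom
      · rw [Ideal.map_map]
        congr 1
        ext <;> simp
      · rfl

theorem exists_finset_degree_le [Finite σ] (m : MonomialOrder σ) (I : Ideal (MvPolynomial σ R)) :
    ∃ G : Finset (MvPolynomial σ R), (∀ g ∈ G, g ∈ I ∧ g ≠ 0) ∧
      ∀ p ∈ I, p ≠ 0 → ∃ g ∈ G, m.degree g ≤ m.degree p := by
  classical
  let Δ : Set (σ →₀ ℕ) := m.degree '' {p | p ∈ I ∧ p ≠ 0}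
  have hfin : {d | Minimal (· ∈ Δ) d}.Finite :=
    WellQuasiOrderedLE.finite_of_isAntichain (setOfPred_minimal_antichain _)
  obtain ⟨G, hG, himage⟩ := Finset.subset_set_image_iff.mp
    (show (hfin.toFinset : Set (σ →₀ ℕ)) ⊆ Δ from fun d hd => (hfin.mem_toFinset.mp hd).1)
  refine ⟨G, hG, fun p hp hp0 => ?_⟩
  obtain ⟨d, hdp, hd⟩ := exists_minimal_le_of_wellFoundedLT (· ∈ Δ) (m.degree p) ⟨p, ⟨hp, hp0⟩, rfl⟩
  obtain ⟨g, hg, rfl⟩ := Finset.mem_image.mp (himage.ge (hfin.mem_toFinset.mpr hd))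
  exact ⟨g, hg, hdp⟩

theorem free_quotient_of_isUnit_leadingCoeff {m : MonomialOrder σ} {I : Ideal (MvPolynomial σ R)}
    {G : Set (MvPolynomial σ R)} (hGI : G ⊆ I) (hunit : ∀ g ∈ G, IsUnit (m.leadingCoeff g))
    (hdeg : ∀ p ∈ I, p ≠ 0 → ∃ g ∈ G, m.degree g ≤ m.degree p) :
    Module.Free R (MvPolynomial σ R ⧸ I) := by
  let N := restrictSupport R {s | ∀ g ∈ G, ¬ m.degree g ≤ s}
  have : Module.Free R N := Module.Free.of_basis (basisRestrictSupport R _)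
  let χ : N →ₗ[R] MvPolynomial σ R ⧸ I := (Ideal.Quotient.mkₐ R I).toLinearMap ∘ₗ N.subtype
  refine Module.Free.of_equiv (LinearEquiv.ofBijective χ ⟨?_, fun z => ?_⟩)
  · rw [injective_iff_map_eq_zero]
    rintro ⟨r, hrN⟩ hr
    by_contra hr0
    have hr0 : r ≠ 0 := fun h => hr0 (Subtype.ext h)
    obtain ⟨g, hg, hgr⟩ := hdeg r (Ideal.Quotient.eq_zero_iff_mem.mp hr) hr0
    exact (mem_restrictSupport_iff R).mp hrN (m.degree_mem_support hr0) g hg hgr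
  · obtain ⟨p, rfl⟩ := Ideal.Quotient.mk_surjective z
    obtain ⟨q, r, rfl, -, hr⟩ := m.div_set hunit p
    refine ⟨⟨r, (mem_restrictSupport_iff R).mpr hr⟩, ?_⟩
    have hq : Finsupp.linearCombination _ (fun g : G => (g : MvPolynomial σ R)) q ∈ I :=
      I.sum_mem fun g _ => I.mul_mem_left _ (hGI g.2)
    change Ideal.Quotient.mk I r = _
    rw [map_add, Ideal.Quotient.eq_zero_iff_mem.mpr hq, zero_add]

theorem exists_mem_degree_eq_of_mem_map (m : MonomialOrder σ) {M : Submonoid R}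
    (hM : M ≤ nonZeroDivisors R) [IsLocalization M S] {I : Ideal (MvPolynomial σ R)}
    {p : MvPolynomial σ S} (hp : p ∈ I.map (map (algebraMap R S))) (hp0 : p ≠ 0) :
    ∃ q ∈ I, q ≠ 0 ∧ m.degree q = m.degree p := by
  let : Algebra (MvPolynomial σ R) (MvPolynomial σ S) := MvPolynomial.algebraMvPolynomial
  have := MvPolynomial.isLocalization (σ := σ) M S
  obtain ⟨⟨⟨q, hqI⟩, _, b, hb, rfl⟩, hq⟩ :=
    (IsLocalization.mem_map_algebraMap_iff (M.map C) (MvPolynomial σ S)).mp hp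
  have hu : IsUnit (algebraMap R S b) := IsLocalization.map_units S ⟨b, hb⟩
  have hq : map (algebraMap R S) q = algebraMap R S b • p := by
    rw [smul_eq_C_mul, mul_comm, ← map_C]
    exact hq.symm
  have hdeg : m.degree q = m.degree p := by
    rw [← degree_map_of_injective m (IsLocalization.injective S hM), hq,
      m.degree_smul_of_isRegular hu.isRegular]
  refine ⟨q, hqI, ?_, hdeg⟩
  rintro rfl
  rw [map_zero, eq_comm, hu.smul_eq_zero] at hq
  exact hp0 hq

theorem exists_free_localizationAway_tensorProduct (R A : Type*) [CommRing R] [IsDomain R]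
    [CommRing A] [Algebra R A] [Algebra.FiniteType R A] :
    ∃ a : R, a ≠ 0 ∧ Module.Free (Localization.Away a) (Localization.Away a ⊗[R] A) := by
  classical
  obtain ⟨n, π, hπ⟩ := Algebra.FiniteType.iff_quotient_mvPolynomial''.mp ‹Algebra.FiniteType R A›
  let m : MonomialOrder (Fin n) := MonomialOrder.lex
  obtain ⟨G, hG, hdeg⟩ := exists_finset_degree_le m (RingHom.ker π)
  let a : R := ∏ g ∈ G, m.leadingCoeff g
  have ha : a ≠ 0 := Finset.prod_ne_zero_iff.mpr fun g hg =>
    m.leadingCoeff_ne_zero_iff.mpr (hG g hg).2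
  let S := Localization.Away a
  have hM : Submonoid.powers a ≤ nonZeroDivisors R :=
    powers_le_nonZeroDivisors_of_noZeroDivisors ha
  have hinj : Function.Injective (algebraMap R S) := IsLocalization.injective S hM
  have : Module.Free S (MvPolynomial (Fin n) S ⧸ (RingHom.ker π).map (map (algebraMap R S))) := by
    refine free_quotient_of_isUnit_leadingCoeff (m := m)
      (G := map (algebraMap R S) '' G) ?_ ?_ fun p hp hp0 => ?_
    · rintro _ ⟨g, hg, rfl⟩
      exact Ideal.mem_map_of_mem _ (hG g hg).1
    · rintro _ ⟨g, hg, rfl⟩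
      rw [leadingCoeff_map_of_injective m hinj]
      exact isUnit_of_dvd_unit (map_dvd _ (Finset.dvd_prod_of_mem m.leadingCoeff hg))
        (IsLocalization.Away.algebraMap_isUnit a)
    · obtain ⟨q, hq, hq0, hqp⟩ := exists_mem_degree_eq_of_mem_map m hM hp hp0
      obtain ⟨g, hg, hgq⟩ := hdeg q hq hq0
      exact ⟨_, ⟨g, hg, rfl⟩, by rwa [degree_map_of_injective m hinj, ← hqp]⟩
  let e : S ⊗[R] A ≃ₐ[S] S ⊗[R] (MvPolynomial (Fin n) R ⧸ RingHom.ker π) :=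
    Algebra.TensorProduct.congr .refl (Ideal.quotientKerAlgEquivOfSurjective hπ).symm
  exact ⟨a, ha, .of_equiv (e.trans (tensorMvPolynomialQuotientEquiv _)).symm.toLinearEquiv⟩

end GenericFreeness

section GenericRegularity

theorem lTensor_injective_of_flat_baseChange {R S M N P : Type*} [CommRing R] [CommRing S]
    [Algebra R S] [AddCommGroup M] [Module R M] [AddCommGroup N] [Module R N] [AddCommGroup P]
    [Module R P] [Module.Flat R S] [Module.Flat S (S ⊗[R] P)] {f : M →ₗ[R] N} {g : N →ₗ[R] P}
    (hf : Function.Injective f) (hg : Function.Surjective g) (hfg : Function.Exact f g)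
    (Q : Type*) [AddCommGroup Q] [Module R Q] [Module S Q] [IsScalarTower R S Q] :
    Function.Injective (f.lTensor Q) := by
  have hinj : Function.Injective ((f.baseChange S).lTensor Q) :=
    LinearMap.lTensor_injective_of_exact_of_flat (g.baseChange S)
      (LinearMap.lTensor_surjective S hg) (f.baseChange S)
      (Module.Flat.lTensor_preserves_injective_linearMap f hf) (lTensor_exact S hfg hg) Q
  rw [← TensorProduct.AlgebraTensorModule.coe_lTensor (A := S)]
  let e := TensorProduct.AlgebraTensorModule.cancelBaseChange R S S Q M
  refine (Function.Injective.of_comp_iff' _ e.bijective).mp ?_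
  rw [← LinearEquiv.coe_toLinearMap, ← LinearMap.coe_comp,
    TensorProduct.AlgebraTensorModule.lTensor_comp_cancelBaseChange]
  exact (TensorProduct.AlgebraTensorModule.cancelBaseChange R S S Q N).injective.comp hinj

variable (R : Type*) [CommRing R] [IsDomain R] {A : Type*} [CommRing A] [Algebra R A]
  [Algebra.FiniteType R A]

theorem exists_ne_zero_forall_isRegular_one_tmul {h : A} (hh : IsRegular h) :
    ∃ a : R, a ≠ 0 ∧ ∀ (S : Type w) [CommRing S] [Algebra R S], IsUnit (algebraMap R S a) →
      IsRegular (1 ⊗ₜ h : S ⊗[R] A) := by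
  obtain ⟨a, ha, hfree⟩ := exists_free_localizationAway_tensorProduct R (A ⧸ Ideal.span {h})
  refine ⟨a, ha, fun S _ _ hu => ?_⟩
  let := (IsLocalization.Away.lift (S := Localization.Away a) a hu).toAlgebra
  have : IsScalarTower R (Localization.Away a) S :=
    .of_algebraMap_eq fun b => (IsLocalization.Away.lift_eq a hu b).symm
  have : Module.Flat R (Localization.Away a) := IsLocalization.flat _ (Submonoid.powers a)
  have hexact : Function.Exact (LinearMap.mulLeft R h)
      (Ideal.Quotient.mkₐ R (Ideal.span {h})).toLinearMap := fun x => by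
    change Ideal.Quotient.mk _ x = 0 ↔ _
    rw [Ideal.Quotient.eq_zero_iff_mem, Ideal.mem_span_singleton']
    simp [mul_comm h]
  have hinj := lTensor_injective_of_flat_baseChange (S := Localization.Away a)
    (f := LinearMap.mulLeft R h) hh.left Ideal.Quotient.mk_surjective hexact S
  have hmul : LinearMap.mulLeft R (1 ⊗ₜ h : S ⊗[R] A) = (LinearMap.mulLeft R h).lTensor S := by
    ext
    simp
  rw [← hmul] at hinj
  exact isLeftRegular_iff_isRegular.mp hinj

variable (A) in
theorem exists_ne_zero_forall_nontrivial_tensorProduct [FaithfulSMul R A] :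
    ∃ a : R, a ≠ 0 ∧ ∀ (S : Type w) [CommRing S] [Nontrivial S] [Algebra R S],
      IsUnit (algebraMap R S a) → Nontrivial (S ⊗[R] A) := by
  obtain ⟨a, ha, hfree⟩ := exists_free_localizationAway_tensorProduct R A
  refine ⟨a, ha, fun S _ _ _ hu => ?_⟩
  let φ := IsLocalization.Away.lift (S := Localization.Away a) a hu
  let := φ.toAlgebra
  have : IsScalarTower R (Localization.Away a) S :=
    .of_algebraMap_eq fun b => (IsLocalization.Away.lift_eq a hu b).symm
  have : Module.Flat R (Localization.Away a) := IsLocalization.flat _ (Submonoid.powers a)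
  have : Nontrivial (Localization.Away a) := φ.domain_nontrivial
  have : Nontrivial (Localization.Away a ⊗[R] A) :=
    (Algebra.TensorProduct.includeLeft_injective (S := R) (A := Localization.Away a)
      (FaithfulSMul.algebraMap_injective R A)).nontrivial
  exact (TensorProduct.AlgebraTensorModule.cancelBaseChange R (Localization.Away a) S S
    A).injective.nontrivial

end GenericRegularity

section PrimitiveElement

open Polynomial

variable {T A E L : Type*} [CommRing T] [CommRing A] [Algebra T A]

theorem exists_ne_zero_forall_pow_smul_mem [IsDomain T] [Algebra.FiniteType T A]
    {S : Subalgebra T A} (hS : ∀ x, ∃ d : T, d ≠ 0 ∧ d • x ∈ S) :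
    ∃ d : T, d ≠ 0 ∧ ∀ x, ∃ n : ℕ, d ^ n • x ∈ S := by
  classical
  choose D hD0 hD using hS
  obtain ⟨s, hs⟩ := ‹Algebra.FiniteType T A›
  refine ⟨∏ x ∈ s, D x, Finset.prod_ne_zero_iff.mpr fun x _ => hD0 x, fun x => ?_⟩
  obtain ⟨n, hn⟩ := Algebra.pow_smul_mem_of_smul_subset_of_mem_adjoin (∏ x ∈ s, D x) (s : Set A) S
    (by
      rintro _ ⟨z, hz, rfl⟩
      change (∏ x ∈ s, D x) • z ∈ S
      rw [← Finset.prod_erase_mul _ _ hz, mul_smul]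
      exact S.smul_mem (hD z) _)
    (hs ▸ Algebra.mem_top : x ∈ Algebra.adjoin T (s : Set A)) (S.algebraMap_mem _)
  exact ⟨n, hn n le_rfl⟩

variable [Field E] [Field L] [Algebra T E] [Algebra A L] [Algebra T L] [Algebra E L]
  [IsScalarTower T A L] [IsScalarTower T E L]

theorem adjoin_singleton_smul_eq_top {e : E} (he : e ≠ 0) {y : L}
    (hy : Algebra.adjoin E {y} = ⊤) : Algebra.adjoin E {e • y} = ⊤ := by
  rw [eq_top_iff, ← hy, Algebra.adjoin_le_iff, Set.singleton_subset_iff, SetLike.mem_coe]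
  exact (Submodule.smul_mem_iff (Subalgebra.toSubmodule (Algebra.adjoin E {e • y})) he).mp
    (Algebra.self_mem_adjoin_singleton E (e • y))

theorem exists_adjoin_singleton_eq_top [IsDomain T] [IsDomain A] [IsFractionRing T E]
    [IsFractionRing A L] [FaithfulSMul T A] [Algebra.IsAlgebraic T A] [FiniteDimensional E L]
    [Algebra.IsSeparable E L] :
    ∃ (y : A) (g : T[X]), Algebra.adjoin E {algebraMap A L y} = ⊤ ∧ g.Monic ∧
      g.map (algebraMap T E) = minpoly E (algebraMap A L y) := by
  have hTE {e : T} (he : e ∈ nonZeroDivisors T) : algebraMap T E e ≠ 0 :=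
    IsFractionRing.to_map_ne_zero_of_mem_nonZeroDivisors he
  obtain ⟨x, hx⟩ := Field.exists_primitive_element E L
  obtain ⟨⟨y, d, hd⟩, hy⟩ := IsLocalizedModule.surj (nonZeroDivisors T)
    (IsScalarTower.toAlgHom T A L).toLinearMap x
  replace hy : algebraMap T E d • x = algebraMap A L y := by rwa [algebraMap_smul]
  let μ := minpoly E (algebraMap A L y)
  have hint : IsIntegral E (algebraMap A L y) := Algebra.IsIntegral.isIntegral _
  have hμ : μ.Monic := minpoly.monic hint
  let e := IsLocalization.commonDenom (nonZeroDivisors T) μ.support μ.coeff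
  have hey : algebraMap T E e • algebraMap A L y = algebraMap A L ((e : T) • y) :=
    (algebraMap_smul E (e : T) _).trans (map_smul (IsScalarTower.toAlgHom T A L) (e : T) y).symm
  obtain ⟨g, hg, -, hgm⟩ := lifts_and_natDegree_eq_and_monic
    (IsLocalization.scaleRoots_commonDenom_mem_lifts (nonZeroDivisors T) μ
      ⟨1, by rw [map_one, hμ.leadingCoeff]⟩)
    ((monic_scaleRoots_iff _).mpr hμ)
  refine ⟨(e : T) • y, g, ?_, hgm, ?_⟩
  · rw [← hey, ← hy]
    exact adjoin_singleton_smul_eq_top (hTE e.2) <| adjoin_singleton_smul_eq_top (hTE hd) <|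
      Algebra.adjoin_eq_top_of_primitive_element (Algebra.IsAlgebraic.isAlgebraic x) hx
  · rw [hg, ← hey, IsIntegrallyClosed.minpoly_smul (hTE e.2) hint]

theorem ker_aeval_eq_span_singleton [FaithfulSMul T E] [FaithfulSMul A L] {y : A} {g : T[X]}
    (hg : g.Monic) (hgy : g.map (algebraMap T E) = minpoly E (algebraMap A L y)) :
    RingHom.ker (aeval (R := T) y) = Ideal.span {g} := by
  ext p
  rw [RingHom.mem_ker, Ideal.mem_span_singleton,
    ← map_dvd_map _ (FaithfulSMul.algebraMap_injective T E) hg, hgy, minpoly.dvd_iff,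
    aeval_map_algebraMap, aeval_algebraMap_apply,
    FaithfulSMul.algebraMap_eq_zero_iff]

theorem exists_ne_zero_smul_mem_range_aeval [IsDomain T] [IsFractionRing T E] [FaithfulSMul A L]
    {y : A} (hy : Algebra.adjoin E {algebraMap A L y} = ⊤) (x : A) :
    ∃ d : T, d ≠ 0 ∧ d • x ∈ (aeval (R := T) y).range := by
  have hx : algebraMap A L x ∈ Algebra.adjoin E {algebraMap A L y} := hy ▸ Algebra.mem_top
  rw [Algebra.adjoin_singleton_eq_range_aeval] at hx
  obtain ⟨P, hP : aeval (algebraMap A L y) P = algebraMap A L x⟩ := hx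
  obtain ⟨b, hb, hbP⟩ := IsLocalization.integerNormalization_spec (nonZeroDivisors T) P
  refine ⟨b, nonZeroDivisors.ne_zero hb,
    IsLocalization.integerNormalization (nonZeroDivisors T) P,
    FaithfulSMul.algebraMap_injective A L ?_⟩
  change algebraMap A L (aeval y _) = _
  rw [← aeval_algebraMap_apply, ← aeval_map_algebraMap E, hbP]
  exact (map_smul ((aeval (algebraMap A L y)).restrictScalars T) b P).trans <|
    (congrArg (b • ·) hP).trans (map_smul (IsScalarTower.toAlgHom T A L) b x).symm

theorem exists_ker_aeval_eq_span_singleton (T A : Type*) [CommRing T] [IsDomain T] [CharZero T]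
    [CommRing A] [IsDomain A] [Algebra T A] [FaithfulSMul T A] [Algebra.FiniteType T A]
    [Algebra.IsAlgebraic T A] :
    ∃ (y : A) (g : T[X]) (d : T), RingHom.ker (aeval (R := T) y) = Ideal.span {g} ∧ g ≠ 0 ∧ d ≠ 0 ∧
      ∀ x : A, ∃ n : ℕ, d ^ n • x ∈ (aeval (R := T) y).range := by
  let L := FractionRing A
  let E := FractionRing T
  let : Algebra E L := FractionRing.liftAlgebra T L
  have : CharZero E := charZero_of_injective_algebraMap (IsFractionRing.injective T E)
  have : Algebra.IsAlgebraic T L := (IsFractionRing.isAlgebraic_iff' T A L).mp inferInstance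
  have : Algebra.IsAlgebraic E L := (IsFractionRing.comap_isAlgebraic_iff (A := T)).mp inferInstance
  have : Algebra.EssFiniteType A L := .of_isLocalization L (nonZeroDivisors A)
  have : Algebra.EssFiniteType T L := .comp T A L
  have : Algebra.EssFiniteType E L := .of_comp T E L
  have : FiniteDimensional E L := Algebra.finite_of_essFiniteType_of_isAlgebraic
  obtain ⟨y, g, hy, hg, hgy⟩ := exists_adjoin_singleton_eq_top (T := T) (A := A) (E := E) (L := L)
  obtain ⟨d, hd, hdx⟩ :=
    exists_ne_zero_forall_pow_smul_mem (exists_ne_zero_smul_mem_range_aeval (T := T) hy)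
  exact ⟨y, g, d, ker_aeval_eq_span_singleton hg hgy, hg.ne_zero, hd, hdx⟩

end PrimitiveElement

section BirationalHypersurface

open MvPolynomial

theorem exists_ker_eq_span_singleton (B : Type*) (A : Type w) [CommRing B] [IsDomain B] [CharZero B]
    [CommRing A] [IsDomain A] [Algebra B A] [FaithfulSMul B A] [Algebra.FiniteType B A] :
    ∃ (σ : Type w) (_ : Finite σ) (φ : MvPolynomial σ B →ₐ[B] A) (g h : MvPolynomial σ B),
      RingHom.ker φ = Ideal.span {g} ∧ g ≠ 0 ∧ φ h ≠ 0 ∧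
        ∀ x : A, ∃ n : ℕ, φ h ^ n * x ∈ φ.range := by
  obtain ⟨s, hs⟩ := ‹Algebra.FiniteType B A›
  have : Algebra.IsAlgebraic (Algebra.adjoin B (s : Set A)) A :=
    ⟨fun x => isAlgebraic_algebraMap (⟨x, hs ▸ Algebra.mem_top⟩ : Algebra.adjoin B (s : Set A))⟩
  have : Algebra.FiniteType B A := ⟨s, hs⟩
  obtain ⟨t, hts, ht⟩ := exists_isTranscendenceBasis_subset (R := B) (s : Set A)
  have : Finite t := (s.finite_toSet.subset hts).to_subtype
  let T := MvPolynomial t B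
  let : Algebra T A := (aeval (R := B) ((↑) : t → A)).toAlgebra
  have : IsScalarTower B T A := .of_algebraMap_eq' (aeval ((↑) : t → A)).comp_algebraMap.symm
  have hTA : Function.Injective (algebraMap T A) := ht.1
  have : FaithfulSMul T A := (faithfulSMul_iff_algebraMap_injective T A).mpr hTA
  have : Algebra.IsAlgebraic T A := by
    have := ht.isAlgebraic
    refine Algebra.IsAlgebraic.of_ringHom_of_comp_eq ht.1.aevalEquiv (RingHom.id A)
      ht.1.aevalEquiv.surjective Function.injective_id ?_
    ext p <;> simp [T, RingHom.algebraMap_toAlgebra]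
  have : Algebra.FiniteType T A := .of_restrictScalars_finiteType B T A
  obtain ⟨y, g, d, hker, hg, hd, hx⟩ := exists_ker_aeval_eq_span_singleton T A
  let e := optionEquivLeft B t
  let φ : MvPolynomial (Option t) B →ₐ[B] A :=
    ((Polynomial.aeval y).restrictScalars B).comp e.toAlgHom
  have hφ (q : Polynomial T) : φ (e.symm q) = Polynomial.aeval y q :=
    congrArg (Polynomial.aeval y) (e.apply_symm_apply q)
  have hφd : φ (e.symm (Polynomial.C d)) = algebraMap T A d := by
    rw [hφ, Polynomial.aeval_C]
  refine ⟨Option t, inferInstance, φ, e.symm g, e.symm (Polynomial.C d), ?_, ?_, ?_, fun x => ?_⟩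
  · ext p
    rw [Ideal.mem_span_singleton, ← map_dvd_iff e, e.apply_symm_apply, ← Ideal.mem_span_singleton,
      ← hker]
    rfl
  · rwa [ne_eq, EmbeddingLike.map_eq_zero_iff]
  · rwa [hφd, ne_eq, FaithfulSMul.algebraMap_eq_zero_iff]
  · obtain ⟨n, q, hq : Polynomial.aeval y q = _⟩ := hx x
    exact ⟨n, e.symm q, by rw [hφd, ← map_pow, ← Algebra.smul_def, ← hq]; exact hφ q⟩

theorem exists_subalgebra_algEquiv_quotient_span_singleton (B : Type*) (A : Type w) [CommRing B]
    [IsDomain B] [CharZero B] [CommRing A] [IsDomain A] [Algebra B A] [FaithfulSMul B A]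
    [Algebra.FiniteType B A] :
    ∃ (σ : Type w) (_ : Finite σ) (g : MvPolynomial σ B) (S : Subalgebra B A) (s : S), g ≠ 0 ∧
      Nonempty (S ≃ₐ[B] MvPolynomial σ B ⧸ Ideal.span {g}) ∧ s ≠ 0 ∧
        ∀ x : A, ∃ n : ℕ, (s : A) ^ n * x ∈ S := by
  obtain ⟨σ, hσ, φ, g, h, hker, hg, hh, hx⟩ := exists_ker_eq_span_singleton B A
  exact ⟨σ, hσ, g, φ.range, φ.rangeRestrict h, hg,
    ⟨(Ideal.quotientKerEquivRange φ).symm.trans (Ideal.quotientEquivAlgOfEq B hker)⟩,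
    fun h0 => hh (congrArg Subtype.val h0), hx⟩

theorem isLocalizationAway_of_forall_pow_mul_mem {B A : Type*} [CommRing B] [CommRing A]
    [Algebra B A] {S : Subalgebra B A} {s : S} (hs : ∀ x : A, ∃ n : ℕ, (s : A) ^ n * x ∈ S)
    (A' : Type*) [CommRing A'] [Algebra A A'] [IsLocalization.Away (s : A) A'] :
    IsLocalization.Away s A' := by
  refine (isLocalization_iff _ _).mpr ⟨?_, fun z => ?_, fun {x y} hxy => ?_⟩
  · rintro ⟨_, n, rfl⟩
    change IsUnit (algebraMap A A' (s ^ n : S))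
    rw [SubmonoidClass.coe_pow, map_pow]
    exact (IsLocalization.Away.algebraMap_isUnit (s : A)).pow n
  · obtain ⟨n, a, ha⟩ := IsLocalization.Away.surj (s : A) z
    obtain ⟨m, hm⟩ := hs a
    refine ⟨(⟨_, hm⟩, ⟨s ^ (n + m), n + m, rfl⟩), ?_⟩
    change z * algebraMap A A' (s ^ (n + m) : S) = algebraMap A A' (s ^ m * a)
    rw [SubmonoidClass.coe_pow, pow_add, map_mul, map_mul, ← ha, map_pow, map_pow]
    ring
  · obtain ⟨⟨_, n, rfl⟩, hn⟩ :=
      (IsLocalization.eq_iff_exists (Submonoid.powers (s : A)) A').mp hxy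
    exact ⟨⟨s ^ n, n, rfl⟩, Subtype.ext hn⟩

theorem isDomain_tensorProduct_of_subalgebra {B A κ : Type*} [CommRing B] [CommRing A]
    [Algebra B A] [CommRing κ] [Algebra B κ] {S : Subalgebra B A} {s : S}
    (hs : ∀ x : A, ∃ n : ℕ, (s : A) ^ n * x ∈ S) [IsDomain (κ ⊗[B] S)] [Nontrivial (κ ⊗[B] A)]
    (hreg : IsRegular (1 ⊗ₜ (s : A) : κ ⊗[B] A)) : IsDomain (κ ⊗[B] A) := by
  let A' := Localization.Away (s : A)
  have : IsLocalization.Away s A' := isLocalizationAway_of_forall_pow_mul_mem hs A'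
  have hs0 : (1 ⊗ₜ s : κ ⊗[B] S) ≠ 0 := fun h0 =>
    hreg.ne_zero <| by simpa using congrArg (Algebra.TensorProduct.map (.id B κ) S.val) h0
  have : IsDomain (Localization.Away (1 ⊗ₜ s : κ ⊗[B] S)) :=
    IsLocalization.isDomain_localization (powers_le_nonZeroDivisors_of_noZeroDivisors hs0)
  have : IsDomain (Localization.Away (1 ⊗ₜ (s : A) : κ ⊗[B] A)) :=
    ((IsLocalization.Away.tensorProductEquivTMulRight B κ (s : A) A').symm.trans
      (IsLocalization.Away.tensorProductEquivTMulRight B κ s A')).toMulEquiv.isDomain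
  have hle : Submonoid.powers (1 ⊗ₜ (s : A) : κ ⊗[B] A) ≤ nonZeroDivisors (κ ⊗[B] A) :=
    Submonoid.powers_le.mpr hreg.mem_nonZeroDivisors
  exact (IsLocalization.injective (Localization.Away (1 ⊗ₜ (s : A) : κ ⊗[B] A)) hle).isDomain _

theorem isDomain_tensorProduct_iff_irreducible_map {B K C σ : Type*} [CommRing B] [Field K]
    [Algebra B K] [CommRing C] [Algebra B C] {g : MvPolynomial σ B}
    (e : C ≃ₐ[B] MvPolynomial σ B ⧸ Ideal.span {g}) (hg : map (algebraMap B K) g ≠ 0) :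
    IsDomain (K ⊗[B] C) ↔ Irreducible (map (algebraMap B K) g) := by
  rw [((Algebra.TensorProduct.congr .refl e).trans
      (tensorMvPolynomialQuotientEquiv (S := K) (Ideal.span {g}))).toMulEquiv.isDomain_iff,
    Ideal.map_span, Set.image_singleton, Ideal.Quotient.isDomain_iff_prime,
    Ideal.span_singleton_prime hg, UniqueFactorizationMonoid.irreducible_iff_prime]

end BirationalHypersurface

theorem exists_ne_zero_forall_isDomain_tensorProduct (B K A : Type*) [CommRing B] [IsDomain B]
    [CharZero B] [Field K] [IsAlgClosed K] [Algebra B K] [FaithfulSMul B K] [CommRing A]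
    [Algebra B A] [Algebra.FiniteType B A] [Module.Flat B A] [IsDomain (K ⊗[B] A)] :
    ∃ a : B, a ≠ 0 ∧ ∀ (κ : Type w) [Field κ] [Algebra B κ], algebraMap B κ a ≠ 0 →
      IsDomain (κ ⊗[B] A) := by
  have hBK : Function.Injective (algebraMap B K) := FaithfulSMul.algebraMap_injective B K
  have : Module.Flat B K := flat_field_of_faithfulSMul B K
  have : IsDomain A :=
    (Algebra.TensorProduct.includeRight_injective (A := K) (B := A) hBK).isDomain
      (Algebra.TensorProduct.includeRight (R := B)).toRingHom
  have : Module.IsTorsionFree B A := Module.Flat.isTorsionFree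
  obtain ⟨σ, _, g, S, s, hg, ⟨e⟩, hs0, hs⟩ :=
    exists_subalgebra_algEquiv_quotient_span_singleton B A
  have hKg : MvPolynomial.map (algebraMap B K) g ≠ 0 :=
    (map_ne_zero_iff _ (MvPolynomial.map_injective _ hBK)).mpr hg
  have : IsDomain (K ⊗[B] S) :=
    (Module.Flat.lTensor_preserves_injective_linearMap (M := K) S.val.toLinearMap
      Subtype.val_injective).isDomain (Algebra.TensorProduct.map (.id B K) S.val).toRingHom
  obtain ⟨a₁, ha₁, hirr⟩ := exists_ne_zero_forall_irreducible_map.{w} K g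
    ((isDomain_tensorProduct_iff_irreducible_map e hKg).mp this)
  obtain ⟨a₂, ha₂, hreg⟩ := exists_ne_zero_forall_isRegular_one_tmul.{w} B
    (IsRegular.of_ne_zero (ZeroMemClass.coe_eq_zero.not.mpr hs0))
  obtain ⟨a₃, ha₃, hnontrivial⟩ := exists_ne_zero_forall_nontrivial_tensorProduct.{w} B A
  refine ⟨a₁ * a₂ * a₃, mul_ne_zero (mul_ne_zero ha₁ ha₂) ha₃, fun κ _ _ ha => ?_⟩
  simp only [map_mul, mul_ne_zero_iff] at ha
  obtain ⟨⟨ha₁, ha₂⟩, ha₃⟩ := ha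
  have hgκ := hirr κ (algebraMap B κ) ha₁
  have : IsDomain (κ ⊗[B] S) := (isDomain_tensorProduct_iff_irreducible_map e hgκ.ne_zero).mpr hgκ
  have : Nontrivial (κ ⊗[B] A) := hnontrivial κ ha₃.isUnit
  exact isDomain_tensorProduct_of_subalgebra hs (hreg κ ha₂.isUnit)

section RationalFunctionFibres

open Polynomial

attribute [local instance] Polynomial.algebra

theorem isDomain_fractionRing_tensorProduct_iff (V F D : Type*) [CommRing V] [IsDomain V] [Field F]
    [Algebra V F] [IsFractionRing V F] [CommRing D] [Algebra V D] [Module.Flat V D] :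
    IsDomain (F ⊗[V] D) ↔ IsDomain D := by
  refine ⟨fun _ => ?_, fun _ => ?_⟩
  · exact (Algebra.TensorProduct.includeRight_injective (A := F) (B := D)
      (IsFractionRing.injective V F)).isDomain
        (Algebra.TensorProduct.includeRight (R := V)).toRingHom
  · have : Module.IsTorsionFree V D := Module.Flat.isTorsionFree
    have hle : Algebra.algebraMapSubmonoid D (nonZeroDivisors V) ≤ nonZeroDivisors D := by
      rintro _ ⟨v, hv, rfl⟩
      refine mem_nonZeroDivisors_of_ne_zero ?_
      rwa [ne_eq, FaithfulSMul.algebraMap_eq_zero_iff, ← ne_eq, ← mem_nonZeroDivisors_iff_ne_zero]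
    have : IsDomain (D ⊗[V] F) := IsLocalization.isDomain_of_le_nonZeroDivisors _ hle
    exact (Algebra.TensorProduct.comm V F D).toMulEquiv.isDomain

theorem isDomain_ratFunc_tensorProduct_iff (B κ R : Type*) [CommRing B] [Field κ] [Algebra B κ]
    [CommRing R] [Algebra B R] [Algebra B[X] R] [IsScalarTower B B[X] R] [Module.Flat B[X] R] :
    IsDomain (RatFunc κ ⊗[B[X]] R) ↔ IsDomain (κ ⊗[B] R) := by
  rw [← (Algebra.TensorProduct.cancelBaseChange B[X] κ[X] κ[X] (RatFunc κ)
      R).toMulEquiv.isDomain_iff,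
    isDomain_fractionRing_tensorProduct_iff,
    (Algebra.IsPushout.cancelBaseChangeAlg B κ B[X] κ[X] R).toMulEquiv.isDomain_iff]

theorem isDomain_tensorProduct_localizationAway_iff {S F R : Type*} [CommRing S] [CommRing F]
    [Algebra S F] [CommRing R] [Algebra S R] {g : S} (hg : IsUnit (algebraMap S F g)) :
    IsDomain (F ⊗[S] (Localization.Away g ⊗[S] R)) ↔ IsDomain (F ⊗[S] R) := by
  let : Algebra (Localization.Away g) F := (IsLocalization.Away.lift g hg).toAlgebra
  have : IsScalarTower S (Localization.Away g) F :=
    .of_algebraMap_eq' (IsLocalization.Away.lift_comp g hg).symm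
  rw [← (IsLocalization.algebraTensorEquiv (Submonoid.powers g) (Localization.Away g) F
      (Localization.Away g ⊗[S] R)).toMulEquiv.isDomain_iff,
    (Algebra.TensorProduct.cancelBaseChange S (Localization.Away g) F F R).toMulEquiv.isDomain_iff]

theorem isDomain_tensorProduct_localizationAway_iff_ratFunc {B κ R : Type*} [CommRing B]
    [Field κ] [Algebra B κ] [CommRing R] [Algebra B[X] R] {g : B[X]}
    [Module.Flat B[X] (Localization.Away g ⊗[B[X]] R)] (hg : g.map (algebraMap B κ) ≠ 0) :
    IsDomain (κ ⊗[B] (Localization.Away g ⊗[B[X]] R)) ↔ IsDomain (RatFunc κ ⊗[B[X]] R) := by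
  have hunit : IsUnit (algebraMap B[X] (RatFunc κ) g) := (RatFunc.algebraMap_ne_zero hg).isUnit
  rw [← isDomain_ratFunc_tensorProduct_iff, isDomain_tensorProduct_localizationAway_iff hunit]

theorem exists_ne_zero_forall_isDomain_ratFunc_tensorProduct (B K R : Type*) [CommRing B]
    [IsDomain B] [CharZero B] [Field K] [IsAlgClosed K] [Algebra B K] [FaithfulSMul B K]
    [CommRing R] [Algebra B[X] R] [Algebra.FiniteType B[X] R] [IsDomain (RatFunc K ⊗[B[X]] R)] :
    ∃ a : B, a ≠ 0 ∧ ∀ (κ : Type w) [Field κ] [Algebra B κ], algebraMap B κ a ≠ 0 →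
      IsDomain (RatFunc κ ⊗[B[X]] R) := by
  obtain ⟨g, hg, hfree⟩ := exists_free_localizationAway_tensorProduct B[X] R
  let R' := Localization.Away g ⊗[B[X]] R
  have : Module.Flat B[X] (Localization.Away g) := IsLocalization.flat _ (Submonoid.powers g)
  have : Module.Flat (Localization.Away g) R' := @Module.Flat.of_free _ _ _ _ _ hfree
  have : Module.Flat B[X] R' := .trans B[X] (Localization.Away g) R'
  have : Module.Flat B R' := .trans B B[X] R'
  have : Algebra.FiniteType B[X] (Localization.Away g) :=
    IsLocalization.finiteType_of_monoid_fg (Submonoid.powers g) _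
  have : Algebra.FiniteType B[X] R' := .trans (S := Localization.Away g) inferInstance inferInstance
  have : Algebra.FiniteType B R' := .trans (S := B[X]) inferInstance inferInstance
  have hgK : g.map (algebraMap B K) ≠ 0 :=
    (Polynomial.map_ne_zero_iff (FaithfulSMul.algebraMap_injective B K)).mpr hg
  have : IsDomain (K ⊗[B] R') := (isDomain_tensorProduct_localizationAway_iff_ratFunc hgK).mpr ‹_›
  obtain ⟨a, ha, hfibre⟩ := exists_ne_zero_forall_isDomain_tensorProduct.{w} B K R'
  refine ⟨a * g.leadingCoeff, mul_ne_zero ha (leadingCoeff_ne_zero.mpr hg), fun κ _ _ haκ => ?_⟩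
  rw [map_mul, mul_ne_zero_iff] at haκ
  have hgκ : g.map (algebraMap B κ) ≠ 0 := fun h =>
    haκ.2 <| by rw [leadingCoeff, ← coeff_map, h, coeff_zero]
  exact (isDomain_tensorProduct_localizationAway_iff_ratFunc hgκ).mp (hfibre κ haκ.1)

theorem isDomain_tensorProduct_ratFunc_toAlgebra_iff {B κ : Type*} [CommRing B] [Field κ]
    [Algebra B κ] {f : B[X]} (σ : Localization.Away f →+* RatFunc κ)
    (hσ : σ.comp (algebraMap B[X] (Localization.Away f)) =
      (algebraMap κ[X] (RatFunc κ)).comp (mapRingHom (algebraMap B κ)))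
    (R : Type*) [CommRing R] [Algebra (Localization.Away f) R] [Algebra B[X] R]
    [IsScalarTower B[X] (Localization.Away f) R] :
    letI : Algebra (Localization.Away f) (RatFunc κ) := σ.toAlgebra
    IsDomain (R ⊗[Localization.Away f] RatFunc κ) ↔ IsDomain (RatFunc κ ⊗[B[X]] R) := by
  let : Algebra (Localization.Away f) (RatFunc κ) := σ.toAlgebra
  have : IsScalarTower B[X] (Localization.Away f) (RatFunc κ) := .of_algebraMap_eq' hσ.symm
  rw [(Algebra.TensorProduct.comm _ R (RatFunc κ)).toMulEquiv.isDomain_iff,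
    (IsLocalization.algebraTensorEquiv (Submonoid.powers f) (Localization.Away f) (RatFunc κ)
      R).toMulEquiv.isDomain_iff]

theorem fibre_isDomain_on_zariski_open_general
    (B : Type*) [CommRing B] [IsDomain B] [CharZero B]
    (K : Type*) [Field K] [IsAlgClosed K] [Algebra B K]
    (hBK : Function.Injective (algebraMap B K))
    (f : B[X])
    (R : Type*) [CommRing R] [Algebra (Localization.Away f) R]
    [Algebra.FiniteType (Localization.Away f) R]
    (τ : Localization.Away f →+* RatFunc K)
    (hτ : τ.comp (algebraMap B[X] (Localization.Away f)) =
      (algebraMap K[X] (RatFunc K)).comp (mapRingHom (algebraMap B K)))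
    (hdom :
      letI : Algebra (Localization.Away f) (RatFunc K) := τ.toAlgebra
      IsDomain (R ⊗[Localization.Away f] RatFunc K)) :
    ∃ a : B, a ≠ 0 ∧ ∀ (κ : Type w) [Field κ] (c : B →+* κ), c a ≠ 0 →
      ∀ σ : Localization.Away f →+* RatFunc κ,
        σ.comp (algebraMap B[X] (Localization.Away f)) =
          (algebraMap κ[X] (RatFunc κ)).comp (mapRingHom c) →
        letI : Algebra (Localization.Away f) (RatFunc κ) := σ.toAlgebra
        IsDomain (R ⊗[Localization.Away f] RatFunc κ) := by
  have : FaithfulSMul B K := (faithfulSMul_iff_algebraMap_injective B K).mpr hBK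
  let : Algebra B[X] R :=
    ((algebraMap (Localization.Away f) R).comp (algebraMap _ _)).toAlgebra
  have : IsScalarTower B[X] (Localization.Away f) R := .of_algebraMap_eq' rfl
  have : Algebra.FiniteType B[X] (Localization.Away f) :=
    IsLocalization.finiteType_of_monoid_fg (Submonoid.powers f) _
  have : Algebra.FiniteType B[X] R :=
    .trans (S := Localization.Away f) inferInstance inferInstance
  have : IsDomain (RatFunc K ⊗[B[X]] R) :=
    (isDomain_tensorProduct_ratFunc_toAlgebra_iff τ hτ R).mp hdom
  obtain ⟨a, ha, H⟩ := exists_ne_zero_forall_isDomain_ratFunc_tensorProduct.{w} B K R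
  refine ⟨a, ha, fun κ _ c hc σ hσ => ?_⟩
  let : Algebra B κ := c.toAlgebra
  exact (isDomain_tensorProduct_ratFunc_toAlgebra_iff σ hσ R).mpr (H κ hc)

end RationalFunctionFibres

/-- **Integrality of the fibres on a Zariski open set.**
Let `k` be an algebraically closed field of characteristic zero, `B` a finitely generated
`k`-algebra that is an integral domain, `K` the algebraic closure of `Frac(B)`, and
`f ∈ B[x]` a monic polynomial.  Let `R` be a finitely generated `B[x]_f`-algebra containing
`B[x]_f` that is flat as a `B[x]_f`-module and such that `R ⊗_{B[x]_f} K(x)` is an integral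
domain, the tensor product being formed along the inclusion `τ : B[x]_f ⊆ K(x)`.  Then there
exists a nonzero `a ∈ B` such that for every `k`-algebra homomorphism `c : B → k` with
`c a ≠ 0`, the ring `R ⊗_{B[x]_f} k(x)` is an integral domain, where the tensor product is
formed along the extension `σ : B[x]_f → k(x)` of `c` determined by `c(x) = x`. -/
theorem fibre_isDomain_on_zariski_open
    (k : Type*) [Field k] [IsAlgClosed k] [CharZero k]
    (B : Type*) [CommRing B] [IsDomain B] [Algebra k B] [Algebra.FiniteType k B]
    (K : Type*) [Field K] [IsAlgClosed K] [CharZero K]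
    [Algebra B K] [Algebra.IsAlgebraic B K]
    (hBK : Function.Injective (algebraMap B K))
    [Algebra k K] [IsScalarTower k B K]
    (f : Polynomial B) (hf : f.Monic)
    (R : Type*) [CommRing R] [Algebra (Localization.Away f) R]
    (hRinj : Function.Injective (algebraMap (Localization.Away f) R))
    [Algebra.FiniteType (Localization.Away f) R]
    [Module.Flat (Localization.Away f) R]
    (τ : Localization.Away f →+* RatFunc K)
    (hτ : τ.comp (algebraMap (Polynomial B) (Localization.Away f)) =
      (algebraMap (Polynomial K) (RatFunc K)).comp
        (Polynomial.mapRingHom (algebraMap B K)))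
    (hdom :
      letI : Algebra (Localization.Away f) (RatFunc K) := τ.toAlgebra
      IsDomain (TensorProduct (Localization.Away f) R (RatFunc K))) :
    ∃ a : B, a ≠ 0 ∧ ∀ c : B →ₐ[k] k, c a ≠ 0 →
      ∀ σ : Localization.Away f →+* RatFunc k,
        σ.comp (algebraMap (Polynomial B) (Localization.Away f)) =
          (algebraMap (Polynomial k) (RatFunc k)).comp
            (Polynomial.mapRingHom (c : B →+* k)) →
        letI : Algebra (Localization.Away f) (RatFunc k) := σ.toAlgebra
        IsDomain (TensorProduct (Localization.Away f) R (RatFunc k)) := by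
  have : CharZero B := charZero_of_injective_algebraMap (algebraMap k B).injective
  obtain ⟨a, ha, H⟩ := fibre_isDomain_on_zariski_open_general B K hBK f R τ hτ hdom
  exact ⟨a, ha, fun c => H k (c : B →+* k)⟩
end

section
/- Let F'/F be an extension of differential fields of characteristic zero (the derivation of F' restricts to the derivation of F) such that F' is algebraic over F, and let f₁,…,fₛ ∈ F. Then f₁,…,fₛ are logarithmically independent over F if and only if f₁,…,fₛ are logarithmically independent over F'. -/
/-- A derivation (as a bare function): additive and satisfying the Leibniz rule. -/
def IsDerivationFun {R : Type*} [CommRing R] (δ : R → R) : Prop :=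
  (∀ a b : R, δ (a + b) = δ a + δ b) ∧ (∀ a b : R, δ (a * b) = a * δ b + δ a * b)

/-- Elements `f 0, …, f (s-1)` of a differential field `(F, δ)` are logarithmically
independent over `F` if the only integers `d 0, …, d (s-1)` for which there exists
`a ∈ F, a ≠ 0` with `∑ i, d i • f i = δ a / a` are `d 0 = ⋯ = d (s-1) = 0`. -/
def LogIndep {F : Type*} [Field F] (δ : F → F) {s : ℕ} (f : Fin s → F) : Prop :=
  ∀ (d : Fin s → ℤ) (a : F), a ≠ 0 → (∑ i, (d i : F) * f i) = δ a / a → ∀ i, d i = 0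

/-!
If `a` is algebraic over `F` with logarithmic derivative `g ∈ F`, extend the derivation of `F` to
`F[X]` by `X′ = g * X`. Evaluation at `a` is then a differential homomorphism, so the minimal
polynomial `p` of `a`, of degree `n`, divides `p′`; comparing degrees and leading coefficients,
`p′ = n * g * p`. Hence the constant term of `p`, a nonzero element of `F`, has logarithmic
derivative `n * g`: a relation over the extension descends to `F` after multiplication by `n`.
-/

section ExponentialElements

open Polynomial Differential

lemma coeff_implicitDeriv_C_mul_X {A : Type*} [CommRing A] [Differential A] (g : A) (p : A[X])
    (i : ℕ) : (implicitDeriv (C g * X) p).coeff i = (p.coeff i)′ + i * g * p.coeff i := by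
  have hX : (X * derivative p).coeff i = i * p.coeff i := by
    cases i with
    | zero => simp
    | succ k => rw [coeff_X_mul, coeff_derivative, Nat.cast_succ, mul_comm]
  calc (implicitDeriv (C g * X) p).coeff i
      = (p.coeff i)′ + g * (X * derivative p).coeff i := by simp [implicitDeriv, mul_assoc]
    _ = (p.coeff i)′ + i * g * p.coeff i := by rw [hX]; ring

variable {F K : Type*} [Field F] [Differential F]

lemma implicitDeriv_C_mul_X_minpoly [CommRing K] [Differential K] [Algebra F K]
    [DifferentialAlgebra F K] {g : F} {a : K} (ha : IsIntegral F a)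
    (hg : a′ = algebraMap F K g * a) :
    implicitDeriv (C g * X) (minpoly F a) =
      C ((minpoly F a).natDegree * g) * minpoly F a := by
  set p := minpoly F a
  have hp : p.Monic := minpoly.monic ha
  have hdvd : p ∣ implicitDeriv (C g * X) p := by
    refine minpoly.dvd F a ?_
    rw [← deriv_aeval_eq_implicitDeriv a (C g * X) (by simpa using hg), minpoly.aeval, map_zero]
  have hdeg : (implicitDeriv (C g * X) p).natDegree ≤ p.natDegree := by
    refine natDegree_le_iff_coeff_eq_zero.2 fun i hi ↦ ?_
    rw [coeff_implicitDeriv_C_mul_X, coeff_eq_zero_of_natDegree_lt hi, map_zero, mul_zero, add_zero]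
  have heq := eq_mul_leadingCoeff_of_monic_of_dvd_of_natDegree_le hp hdvd hdeg
  have hlead : p.natDegree * g = (implicitDeriv (C g * X) p).leadingCoeff := by
    simpa [coeff_implicitDeriv_C_mul_X, hp.coeff_natDegree] using
      congrArg (coeff · p.natDegree) heq
  rwa [hlead, mul_comm (C (leadingCoeff _))]

lemma logDeriv_coeff_zero_minpoly [Field K] [Differential K] [Algebra F K]
    [DifferentialAlgebra F K] {g : F} {a : K} (ha : IsIntegral F a) (ha₀ : a ≠ 0)
    (hg : logDeriv a = algebraMap F K g) :
    logDeriv ((minpoly F a).coeff 0) = (minpoly F a).natDegree * g := by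
  have hcoeff := congrArg (coeff · 0) (implicitDeriv_C_mul_X_minpoly ha ((div_eq_iff ha₀).1 hg))
  simp only [coeff_implicitDeriv_C_mul_X, coeff_C_mul, Nat.cast_zero, zero_mul, add_zero] at hcoeff
  exact (div_eq_iff (minpoly.coeff_zero_ne_zero ha ha₀)).2 hcoeff

end ExponentialElements

/-- The Mathlib `Differential` structure whose derivation is, definitionally, the bare function `δ`;
it makes `Differential.logDeriv` and `DifferentialAlgebra` available for `δ`. -/
@[reducible]
def IsDerivationFun.toDifferential {R : Type*} [CommRing R] {δ : R → R}
    (h : IsDerivationFun δ) : Differential R where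
  deriv := Derivation.mk' (AddMonoidHom.mk' δ h.1).toIntLinearMap fun a b ↦ by
    simp [h.2, mul_comm b]

namespace LogIndep

variable {F F' : Type*} [Field F] [Field F'] [Algebra F F'] {δ : F → F} {δ' : F' → F'}
  {s : ℕ} {f : Fin s → F}

lemma of_algebraMap (hres : ∀ a : F, δ' (algebraMap F F' a) = algebraMap F F' (δ a))
    (hf : LogIndep δ' fun i ↦ algebraMap F F' (f i)) : LogIndep δ f := by
  intro d a ha hd
  refine hf d (algebraMap F F' a) ((map_ne_zero _).2 ha) ?_
  rw [hres, ← map_div₀, ← hd]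
  simp

open Differential in
lemma map_algebraMap (hδ : IsDerivationFun δ) (hδ' : IsDerivationFun δ')
    (hres : ∀ a : F, δ' (algebraMap F F' a) = algebraMap F F' (δ a))
    (halg : ∀ a : F', δ' a / a ∈ (algebraMap F F').range → IsAlgebraic F a)
    (hf : LogIndep δ f) : LogIndep δ' fun i ↦ algebraMap F F' (f i) := by
  let _ := hδ.toDifferential
  let _ := hδ'.toDifferential
  have : DifferentialAlgebra F F' := ⟨hres⟩
  intro d a ha hd i
  have hg : logDeriv a = algebraMap F F' (∑ i, d i * f i) :=
    calc logDeriv a = δ' a / a := rfl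
      _ = algebraMap F F' (∑ i, d i * f i) := by
        rw [← hd]; simp only [map_sum, map_mul, map_intCast]
  have hint : IsIntegral F a := (halg a ⟨_, hg.symm⟩).isIntegral
  set n := (minpoly F a).natDegree
  have hrel : ∑ i, ((n * d i : ℤ) : F) * f i = logDeriv ((minpoly F a).coeff 0) := by
    rw [logDeriv_coeff_zero_minpoly hint ha hg, Finset.mul_sum]
    exact Finset.sum_congr rfl fun i _ ↦ by push_cast; ring
  have hnd : (n : ℤ) * d i = 0 :=
    hf (fun i ↦ n * d i) _ (minpoly.coeff_zero_ne_zero hint ha) hrel i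
  exact (mul_eq_zero.1 hnd).resolve_left (mod_cast (minpoly.natDegree_pos hint).ne')

end LogIndep

theorem logIndep_iff_of_algebraic_general
    {F F' : Type*} [Field F] [Field F'] [Algebra F F'] {δ : F → F} {δ' : F' → F'}
    (hδ : IsDerivationFun δ) (hδ' : IsDerivationFun δ')
    (hres : ∀ a : F, δ' (algebraMap F F' a) = algebraMap F F' (δ a))
    (halg : ∀ a : F', δ' a / a ∈ (algebraMap F F').range → IsAlgebraic F a)
    {s : ℕ} (f : Fin s → F) :
    LogIndep δ f ↔ LogIndep δ' (fun i => algebraMap F F' (f i)) :=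
  ⟨.map_algebraMap hδ hδ' hres halg, .of_algebraMap hres⟩

/-- **Logarithmic independence is preserved by algebraic extensions.**
Let `F'/F` be an extension of differential fields of characteristic zero (so the derivation of
`F'` restricts to the derivation of `F`) such that `F'` is algebraic over `F`, and let
`f 0, …, f (s-1) ∈ F`.  Then `f 0, …, f (s-1)` are logarithmically independent over `F` if and
only if they are logarithmically independent over `F'`. -/
theorem logIndep_iff_of_algebraic
    (F F' : Type*) [Field F] [Field F'] [CharZero F] [CharZero F']
    [Algebra F F'] [Algebra.IsAlgebraic F F']
    (δ : F → F) (δ' : F' → F')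
    (hδ : IsDerivationFun δ) (hδ' : IsDerivationFun δ')
    (hres : ∀ a : F, δ' (algebraMap F F' a) = algebraMap F F' (δ a))
    {s : ℕ} (f : Fin s → F) :
    LogIndep δ f ↔ LogIndep δ' (fun i => algebraMap F F' (f i)) :=
  logIndep_iff_of_algebraic_general hδ hδ' hres (fun a _ ↦ Algebra.IsAlgebraic.isAlgebraic a) f
end

section
/- Let k be an algebraically closed field of characteristic zero and equip k(x) with the derivation d/dx. Let H be a finitely generated commutative Hopf algebra over k, and let R be a nonzero k(x)-algebra equipped with a derivation δ extending d/dx. Suppose ρ : R → R ⊗_k H is a k(x)-algebra homomorphism satisfying: (i) the comodule axioms (ρ ⊗ id_H)∘ρ = (id_R ⊗ Δ)∘ρ and (id_R ⊗ ε)∘ρ = id_R, where Δ and ε are the comultiplication and counit of H; (ii) compatibility with the derivation, ρ(δ(r)) = (δ ⊗ id_H)(ρ(r)) for all r ∈ R (elements of H are treated as constants); and (iii) the torsor condition that the map R ⊗_{k(x)} R → R ⊗_k H sending a ⊗ b to (a ⊗ 1)·ρ(b) is bijective. Then the intersection of all maximal differential ideals of R is the zero ideal. -/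
open scoped TensorProduct

/-- An ideal `I` of a ring with a derivation `δ` is a maximal differential ideal if it is a
proper ideal stable under `δ` and is not properly contained in any proper `δ`-stable ideal. -/
def IsMaxDiffIdeal {R : Type*} [CommRing R] (δ : R → R) (I : Ideal R) : Prop :=
  I ≠ ⊤ ∧ (∀ a ∈ I, δ a ∈ I) ∧
    ∀ J : Ideal R, (∀ a ∈ J, δ a ∈ J) → I ≤ J → J ≠ ⊤ → J = I

/-!
Write `G = Spec H`. The action of a `k`-point of `G` is an automorphism of `R` commuting with `D`,
so it permutes the maximal differential ideals. If `r` lies in all of them, then for one such ideal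
`m` the image of `ρ r` in `(R ⧸ m) ⊗[k] H` is killed by every `k`-point of `G`. By Cartier's theorem
`H` is reduced, so by the Nullstellensatz this image is zero; the torsor isomorphism turns it into
`1 ⊗ r` in `(R ⧸ m) ⊗[K] R`, where `K = k(x)`, and therefore `r = 0`.

For Cartier's theorem let `I` be the augmentation ideal, `x₁, …, xₙ ∈ I` a basis of `I / I²` and
`Dᵢ` the invariant derivations dual to it. The Euler operator `∑ xᵢ Dᵢ` acts as multiplication by
`j` on `I ^ j / I ^ (j + 1)`. The nilradical `N` is stable under derivations, so if `N ≤ I ^ j` then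
the operator maps `N` into `I ^ (j + 1)`; as `j` is invertible for `j ≠ 0`, `N` lies in every power
of `I`. By Krull's intersection theorem `N` vanishes near the identity, and by translation near
every `k`-point.
-/

namespace DifferentialTorsor

open Coalgebra WithConv

section Contraction

variable {k M N C H : Type*} [CommRing k] [AddCommGroup M] [Module k M] [AddCommGroup N]
  [Module k N] [AddCommGroup C] [Module k C] [AddCommGroup H] [Module k H]

/-- The contraction `m ⊗ h ↦ f h • m` of the second tensor factor against a functional `f`. -/
noncomputable def contract (M : Type*) [AddCommGroup M] [Module k M] (f : H →ₗ[k] k) :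
    M ⊗[k] H →ₗ[k] M :=
  (TensorProduct.rid k M).toLinearMap ∘ₗ f.lTensor M

@[simp]
theorem contract_tmul (f : H →ₗ[k] k) (m : M) (h : H) : contract M f (m ⊗ₜ h) = f h • m := by
  simp [contract]

theorem contract_rTensor (f : H →ₗ[k] k) (T : M →ₗ[k] N) (z : M ⊗[k] H) :
    contract N f (T.rTensor H z) = T (contract M f z) := by
  have : contract N f ∘ₗ T.rTensor H = T ∘ₗ contract M f := by ext; simp
  exact LinearMap.congr_fun this z

theorem contract_lTensor (f : H →ₗ[k] k) (T : C →ₗ[k] H) (z : M ⊗[k] C) :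
    contract M f (T.lTensor M z) = contract M (f ∘ₗ T) z := by
  simp only [contract, LinearMap.lTensor_comp, LinearMap.comp_apply]

theorem contract_contract (f : C →ₗ[k] k) (g : H →ₗ[k] k) (z : (M ⊗[k] C) ⊗[k] H) :
    contract M f (contract (M ⊗[k] C) g z) =
      contract M (LinearMap.mul' k k ∘ₗ TensorProduct.map f g) (TensorProduct.assoc k M C H z) := by
  have : contract M f ∘ₗ contract (M ⊗[k] C) g =
      contract M (LinearMap.mul' k k ∘ₗ TensorProduct.map f g) ∘ₗ
        (TensorProduct.assoc k M C H).toLinearMap := by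
    ext; simp [smul_smul, mul_comm]
  exact LinearMap.congr_fun this z

/-- The endomorphism `m ↦ ∑ f (m₁) • m₀` by which a functional `f` acts through a coaction
`ρ m = ∑ m₀ ⊗ m₁`. Taken at a `k`-point of the group it is the translation by that point, taken
at a tangent vector at the identity it is the corresponding invariant vector field. -/
noncomputable def act (ρ : M →ₗ[k] M ⊗[k] H) (f : H →ₗ[k] k) : M →ₗ[k] M :=
  contract M f ∘ₗ ρ

theorem act_apply (ρ : M →ₗ[k] M ⊗[k] H) (f : H →ₗ[k] k) (m : M) :
    act ρ f m = contract M f (ρ m) :=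
  rfl

theorem act_comm_of_equivariant {ρ : M →ₗ[k] M ⊗[k] H} {D : M →ₗ[k] M}
    (hD : ∀ m, ρ (D m) = D.rTensor H (ρ m)) (f : H →ₗ[k] k) (m : M) :
    act ρ f (D m) = D (act ρ f m) := by
  rw [act_apply, hD, contract_rTensor, act_apply]

end Contraction

/-- The axioms of a right coaction of a coalgebra `H` on a module `M`. -/
structure IsCoaction {k M H : Type*} [CommRing k] [AddCommGroup M] [Module k M] [AddCommGroup H]
    [Module k H] [Coalgebra k H] (ρ : M →ₗ[k] M ⊗[k] H) : Prop where
  coassoc : ∀ m, TensorProduct.assoc k M H H (ρ.rTensor H (ρ m)) = comul.lTensor M (ρ m)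
  counit_right : ∀ m, (counit (R := k) (A := H)).lTensor M (ρ m) = m ⊗ₜ 1

section Coaction

variable {k M H : Type*} [CommRing k] [AddCommGroup M] [Module k M] [AddCommGroup H] [Module k H]
  [Coalgebra k H] {ρ : M →ₗ[k] M ⊗[k] H}

theorem isCoaction_comul : IsCoaction (comul : H →ₗ[k] H ⊗[k] H) :=
  ⟨coassoc_apply, lTensor_counit_comul⟩

theorem IsCoaction.act_counit (hρ : IsCoaction ρ) (m : M) : act ρ counit m = m := by
  simp [act, contract, hρ.counit_right]

theorem IsCoaction.act_convMul (hρ : IsCoaction ρ) (f g : WithConv (H →ₗ[k] k)) (m : M) :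
    act ρ (f * g).ofConv m = act ρ f.ofConv (act ρ g.ofConv m) :=
  calc act ρ (f * g).ofConv m
    _ = contract M (LinearMap.mul' k k ∘ₗ TensorProduct.map f.ofConv g.ofConv)
          (comul.lTensor M (ρ m)) := by
        rw [act_apply, LinearMap.convMul_def, ofConv_toConv, contract_lTensor, LinearMap.comp_assoc]
    _ = contract M f.ofConv (contract (M ⊗[k] H) g.ofConv (ρ.rTensor H (ρ m))) := by
        rw [← hρ.coassoc, contract_contract]
    _ = act ρ f.ofConv (act ρ g.ofConv m) := by rw [contract_rTensor, act_apply, act_apply]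

theorem counit_act_comul (f : H →ₗ[k] k) (h : H) :
    counit (R := k) (act (comul : H →ₗ[k] H ⊗[k] H) f h) = f h := by
  rw [act_apply, ← contract_rTensor, rTensor_counit_comul, contract_tmul, smul_eq_mul, mul_one]

end Coaction

section Points

variable {k A H : Type*} [CommRing k] [CommRing A] [Algebra k A] [CommRing H]

/-- The action of a `k`-point `g` of the affine monoid `Spec H` on a comodule algebra. -/
noncomputable def pointHom [Bialgebra k H] (ρ : A →ₐ[k] A ⊗[k] H) (g : WithConv (H →ₐ[k] k)) :
    A →ₐ[k] A :=
  (Algebra.TensorProduct.rid k k A).toAlgHom.comp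
    ((Algebra.TensorProduct.map (.id k A) g.ofConv).comp ρ)

theorem pointHom_comp_pointHom [Bialgebra k H] {ρ : A →ₐ[k] A ⊗[k] H}
    (hρ : IsCoaction ρ.toLinearMap) (f g : WithConv (H →ₐ[k] k)) :
    (pointHom ρ f).comp (pointHom ρ g) = pointHom ρ (f * g) :=
  AlgHom.ext fun a =>
    (hρ.act_convMul (toConv f.ofConv.toLinearMap) (toConv g.ofConv.toLinearMap) a).symm

theorem pointHom_one [Bialgebra k H] {ρ : A →ₐ[k] A ⊗[k] H} (hρ : IsCoaction ρ.toLinearMap) :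
    pointHom ρ 1 = .id k A :=
  AlgHom.ext hρ.act_counit

variable [HopfAlgebra k H] {ρ : A →ₐ[k] A ⊗[k] H}

/-- A `k`-point of the group `Spec H` acts on a comodule algebra by an automorphism, whose
inverse is the action of the inverse point. -/
noncomputable def pointEquiv (hρ : IsCoaction ρ.toLinearMap) (g : WithConv (H →ₐ[k] k)) :
    A ≃ₐ[k] A :=
  .ofAlgHom (pointHom ρ g) (pointHom ρ g⁻¹)
    (by rw [pointHom_comp_pointHom hρ, mul_inv_cancel, pointHom_one hρ])
    (by rw [pointHom_comp_pointHom hρ, inv_mul_cancel, pointHom_one hρ])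

theorem pointEquiv_apply (hρ : IsCoaction ρ.toLinearMap) (g : WithConv (H →ₐ[k] k)) (a : A) :
    pointEquiv hρ g a = act ρ.toLinearMap g.ofConv.toLinearMap a :=
  rfl

end Points

section PointDerivation

variable {k A V : Type*} [CommRing k] [CommRing A] [Algebra k A] [AddCommGroup V] [Module k V]

/-- A point derivation of an augmented algebra `ε : A → k`: a derivation with values in a
`k`-module on which `A` acts through `ε`. For the counit of a Hopf algebra and `V = k` it is
a tangent vector at the identity. -/
def IsPointDerivation (ε : A →ₐ[k] k) (d : A →ₗ[k] V) : Prop :=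
  ∀ a b, d (a * b) = ε a • d b + ε b • d a

/-- The class of `a - ε a` in the cotangent space of the augmentation; this is the universal
point derivation. -/
noncomputable def cotangentClass (ε : A →ₐ[k] k) : A →ₗ[k] (RingHom.ker ε).Cotangent :=
  (RingHom.ker ε).toCotangent.restrictScalars k ∘ₗ
    (LinearMap.id - Algebra.linearMap k A ∘ₗ ε.toLinearMap).codRestrict
      ((RingHom.ker ε).restrictScalars k) fun a => by simp [RingHom.mem_ker]

theorem sub_algebraMap_mem_ker (ε : A →ₐ[k] k) (a : A) :
    a - algebraMap k A (ε a) ∈ RingHom.ker ε := by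
  simp [RingHom.mem_ker]

theorem cotangentClass_apply (ε : A →ₐ[k] k) (a : A) :
    cotangentClass ε a = (RingHom.ker ε).toCotangent ⟨_, sub_algebraMap_mem_ker ε a⟩ :=
  rfl

theorem cotangentClass_eq_toCotangent (ε : A →ₐ[k] k) (x : RingHom.ker ε) :
    cotangentClass ε x = (RingHom.ker ε).toCotangent x := by
  rw [cotangentClass_apply, Ideal.toCotangent_eq]
  have : ε x = 0 := x.2
  simp [this]

theorem isPointDerivation_cotangentClass (ε : A →ₐ[k] k) :
    IsPointDerivation ε (cotangentClass ε) := by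
  intro a b
  have hmul : (a - algebraMap k A (ε a)) * (b - algebraMap k A (ε b)) ∈ RingHom.ker ε ^ 2 := by
    rw [pow_two]
    exact Ideal.mul_mem_mul (sub_algebraMap_mem_ker ε a) (sub_algebraMap_mem_ker ε b)
  simp only [cotangentClass_apply, ← LinearMap.map_smul_of_tower, ← map_add]
  rw [Ideal.toCotangent_eq]
  convert hmul using 1
  simp only [Submodule.coe_add, Submodule.coe_smul_of_tower, Algebra.smul_def, map_mul]
  ring

theorem IsPointDerivation.comp {W : Type*} [AddCommGroup W] [Module k W] {ε : A →ₐ[k] k}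
    {d : A →ₗ[k] V} (hd : IsPointDerivation ε d) (φ : V →ₗ[k] W) :
    IsPointDerivation ε (φ ∘ₗ d) := fun a b => by
  simp only [LinearMap.comp_apply, hd a b, map_add, map_smul]

theorem finite_cotangent_ker (ε : A →ₐ[k] k) (hfg : (RingHom.ker ε).FG) :
    Module.Finite k (RingHom.ker ε).Cotangent := by
  have : Module.Finite A (RingHom.ker ε) := Module.Finite.iff_fg.2 hfg
  have : Module.Finite A (RingHom.ker ε).Cotangent :=
    .of_surjective _ (RingHom.ker ε).toCotangent_surjective
  have : Module.Finite (A ⧸ RingHom.ker ε) (RingHom.ker ε).Cotangent :=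
    .of_restrictScalars_finite A _ _
  have : Module.Finite k (A ⧸ RingHom.ker ε) :=
    .of_surjective (Algebra.linearMap k _) fun q => by
      obtain ⟨a, rfl⟩ := Ideal.Quotient.mk_surjective q
      exact ⟨ε a, (Ideal.Quotient.eq.2 (sub_algebraMap_mem_ker ε a)).symm⟩
  have : IsScalarTower k (A ⧸ RingHom.ker ε) (RingHom.ker ε).Cotangent := .to₁₃₄ k A _ _
  exact .trans (A ⧸ RingHom.ker ε) _

end PointDerivation

theorem exists_finite_pointDerivation_basis {k A : Type*} [Field k] [CommRing A] [Algebra k A]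
    (ε : A →ₐ[k] k) (hfg : (RingHom.ker ε).FG) :
    ∃ (n : ℕ) (x : Fin n → RingHom.ker ε) (d : Fin n → A →ₗ[k] k),
      (∀ i, IsPointDerivation ε (d i)) ∧
      ∀ a ∈ RingHom.ker ε, ∑ i, d i a • (x i : A) - a ∈ RingHom.ker ε ^ 2 := by
  have := finite_cotangent_ker ε hfg
  let b := Module.finBasis k (RingHom.ker ε).Cotangent
  choose x hx using fun i => (RingHom.ker ε).toCotangent_surjective (b i)
  refine ⟨_, x, fun i => b.coord i ∘ₗ cotangentClass ε,
    fun i => (isPointDerivation_cotangentClass ε).comp _, fun a ha => ?_⟩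
  have hsum : (RingHom.ker ε).toCotangent (∑ i, b.coord i (cotangentClass ε a) • x i) =
      (RingHom.ker ε).toCotangent ⟨a, ha⟩ := by
    simp only [map_sum, LinearMap.map_smul_of_tower, hx, Module.Basis.coord_apply, b.sum_repr]
    exact cotangentClass_eq_toCotangent ε ⟨a, ha⟩
  simpa using (Ideal.toCotangent_eq _).1 hsum

section InvariantDerivation

variable {k A H : Type*} [CommRing k] [CommRing A] [Algebra k A] [CommRing H] [Bialgebra k H]

theorem contract_mul_of_isPointDerivation {ε : H →ₐ[k] k} {d : H →ₗ[k] k}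
    (hd : IsPointDerivation ε d) (z w : A ⊗[k] H) :
    contract A d (z * w) =
      contract A ε.toLinearMap z * contract A d w +
        contract A ε.toLinearMap w * contract A d z := by
  induction z with
  | zero => simp
  | add z₁ z₂ h₁ h₂ => simp only [add_mul, mul_add, map_add, h₁, h₂]; ring
  | tmul a h =>
    induction w with
    | zero => simp
    | add w₁ w₂ h₁ h₂ => simp only [add_mul, mul_add, map_add, h₁, h₂]; ring
    | tmul b h' =>
      simp only [Algebra.TensorProduct.tmul_mul_tmul, contract_tmul, hd h h', smul_eq_mul,
        AlgHom.toLinearMap_apply, Algebra.smul_def, map_add, map_mul]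
      ring

/-- The derivation of a comodule algebra induced by a tangent vector `d` at the identity of the
group `Spec H`, i.e. the infinitesimal action of the Lie algebra. -/
noncomputable def invariantDerivation {ρ : A →ₐ[k] A ⊗[k] H} (hρ : IsCoaction ρ.toLinearMap)
    {d : H →ₗ[k] k} (hd : IsPointDerivation (Bialgebra.counitAlgHom k H) d) : Derivation k A A :=
  .mk' (act ρ.toLinearMap d) fun a b => by
    have hε (a : A) : contract A (Bialgebra.counitAlgHom k H).toLinearMap (ρ a) = a :=
      hρ.act_counit a
    simp only [act_apply, AlgHom.toLinearMap_apply, map_mul,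
      contract_mul_of_isPointDerivation hd, hε, smul_eq_mul]

theorem counit_invariantDerivation_comul {d : H →ₗ[k] k}
    (hd : IsPointDerivation (Bialgebra.counitAlgHom k H) d) (h : H) :
    counit (R := k)
      (invariantDerivation (ρ := Bialgebra.comulAlgHom k H) isCoaction_comul hd h) = d h :=
  counit_act_comul d h

end InvariantDerivation

theorem natCast_mul_mem_iff (k : Type*) {A : Type*} [Field k] [CharZero k] [CommRing A]
    [Algebra k A] (I : Ideal A) {n : ℕ} (hn : n ≠ 0) {a : A} : (n : A) * a ∈ I ↔ a ∈ I := by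
  rw [← map_natCast (algebraMap k A), ← Algebra.smul_def]
  exact (I.restrictScalars k).smul_mem_iff (Nat.cast_ne_zero.2 hn)

theorem euler_sub_natCast_mul_mem {k A : Type*} [CommRing k] [CommRing A] [Algebra k A]
    {I : Ideal A} {E : Derivation k A A} (hE : ∀ a ∈ I, E a - a ∈ I ^ 2) (n : ℕ) {a : A}
    (ha : a ∈ I ^ (n + 1)) :
    E a - ((n + 1 : ℕ) : A) * a ∈ I ^ (n + 2) := by
  induction n generalizing a with
  | zero => simpa using hE a (by simpa using ha)
  | succ n ih =>
    rw [pow_succ'] at ha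
    induction ha using Submodule.mul_induction_on' with
    | mem_mul_mem x hx y hy =>
      have h₁ : x * (E y - ((n + 1 : ℕ) : A) * y) ∈ I ^ (n + 3) := by
        rw [pow_succ' I (n + 2)]
        exact Ideal.mul_mem_mul hx (ih hy)
      have h₂ : (E x - x) * y ∈ I ^ (n + 3) := by
        rw [show n + 3 = 2 + (n + 1) by lia, pow_add]
        exact Ideal.mul_mem_mul (hE x hx) hy
      convert Ideal.add_mem _ h₁ h₂ using 1
      simp only [E.leibniz, smul_eq_mul]
      push_cast
      ring
    | add x _ y _ hx hy =>
      convert Ideal.add_mem _ hx hy using 1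
      rw [map_add]
      ring

section CharZero

variable {k A : Type*} [Field k] [CharZero k] [CommRing A] [Algebra k A]

theorem le_pow_of_euler {ι : Type*} [Fintype ι] {I J : Ideal A} (hJI : J ≤ I) (x : ι → I)
    (D : ι → Derivation k A A) (hE : ∀ a ∈ I, ∑ i, (x i : A) * D i a - a ∈ I ^ 2)
    (hJ : ∀ i, ∀ a ∈ J, D i a ∈ J) (n : ℕ) : J ≤ I ^ n := by
  let E : Derivation k A A := ∑ i, (x i : A) • D i
  have hE_apply (a : A) : E a = ∑ i, (x i : A) * D i a := by
    rw [← Derivation.coeFnAddMonoidHom_apply, map_sum, Finset.sum_apply]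
    rfl
  induction n with
  | zero => simp
  | succ n ih =>
    rcases n with _ | n
    · simpa using hJI
    intro a ha
    have hmem : E a ∈ I ^ (n + 2) := by
      rw [hE_apply, pow_succ']
      exact Ideal.sum_mem _ fun i _ => Ideal.mul_mem_mul (x i).2 (ih (hJ i a ha))
    have hsub := euler_sub_natCast_mul_mem (E := E) (by simpa only [hE_apply] using hE) n (ih ha)
    exact (natCast_mul_mem_iff k _ n.succ_ne_zero).1 ((Submodule.sub_mem_iff_right _ hmem).1 hsub)

theorem isNilpotent_derivation_of_pow_mul_pow_eq_zero (D : Derivation k A A) {a : A} {n j : ℕ}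
    (h : a ^ n * D a ^ j = 0) : IsNilpotent (D a) := by
  induction n generalizing j with
  | zero => exact ⟨j, by simpa using h⟩
  | succ n ih =>
    have hD : D (a ^ (n + 1) * D a ^ j) * D a ^ j = 0 := by rw [h, map_zero, zero_mul]
    have hmul : ((n + 1 : ℕ) : A) * (a ^ n * D a ^ (2 * j + 1)) = 0 := by
      simp only [D.leibniz, D.leibniz_pow a, smul_eq_mul, nsmul_eq_mul, Nat.add_sub_cancel] at hD
      linear_combination hD - D (D a ^ j) * h
    exact ih ((natCast_mul_mem_iff k ⊥ n.succ_ne_zero).1 hmul)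

theorem isNilpotent_derivation (D : Derivation k A A) {a : A} (ha : IsNilpotent a) :
    IsNilpotent (D a) := by
  obtain ⟨n, hn⟩ := ha
  exact isNilpotent_derivation_of_pow_mul_pow_eq_zero D (n := n) (j := 0) (by simpa using hn)

end CharZero

section Cartier

variable {k H : Type*} [Field k] [CharZero k] [CommRing H]

theorem nilradical_le_ker_counit_pow [Bialgebra k H]
    (hfg : (RingHom.ker (Bialgebra.counitAlgHom k H)).FG) (n : ℕ) :
    nilradical H ≤ RingHom.ker (Bialgebra.counitAlgHom k H) ^ n := by
  let I := RingHom.ker (Bialgebra.counitAlgHom k H)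
  obtain ⟨_, x, d, hd, hbasis⟩ :=
    exists_finite_pointDerivation_basis (Bialgebra.counitAlgHom k H) hfg
  let D (i) := invariantDerivation (ρ := Bialgebra.comulAlgHom k H) isCoaction_comul (hd i)
  have hD (i) (a : H) : D i a - algebraMap k H (d i a) ∈ I := by
    rw [← counit_invariantDerivation_comul (hd i)]
    exact sub_algebraMap_mem_ker (Bialgebra.counitAlgHom k H) _
  have hle : nilradical H ≤ I := fun a ha =>
    ((mem_nilradical.1 ha).map (Bialgebra.counitAlgHom k H)).eq_zero
  refine le_pow_of_euler hle x D (fun a ha => ?_) (fun i a => isNilpotent_derivation (D i)) n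
  have hmem : ∑ i, (x i : H) * (D i a - algebraMap k H (d i a)) ∈ I ^ 2 := by
    rw [pow_two]
    exact Ideal.sum_mem _ fun i _ => Ideal.mul_mem_mul (x i).2 (hD i a)
  convert Ideal.add_mem _ hmem (hbasis a ha) using 1
  simp only [mul_sub, Finset.sum_sub_distrib, Algebra.smul_def, mul_comm]
  ring

theorem exists_counit_eq_zero_and_mul_eq_self [Bialgebra k H] [IsNoetherianRing H] {a : H}
    (ha : IsNilpotent a) :
    ∃ s : H, counit (R := k) s = 0 ∧ s * a = a := by
  have hmem : a ∈ (⨅ n : ℕ, RingHom.ker (Bialgebra.counitAlgHom k H) ^ n • ⊤ : Ideal H) := by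
    simp only [smul_eq_mul, Ideal.mul_top, Submodule.mem_iInf]
    exact fun n => nilradical_le_ker_counit_pow (IsNoetherian.noetherian _) n ha
  obtain ⟨⟨s, hs⟩, hsa⟩ := (Ideal.mem_iInf_smul_pow_eq_bot_iff _ a).1 hmem
  exact ⟨s, hs, hsa⟩

theorem exists_point_eq_zero_and_mul_eq_self [HopfAlgebra k H] [IsNoetherianRing H] (g : H →ₐ[k] k)
    {a : H} (ha : IsNilpotent a) :
    ∃ s : H, g s = 0 ∧ s * a = a := by
  let τ := pointEquiv (ρ := Bialgebra.comulAlgHom k H) isCoaction_comul (toConv g)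
  have hτ (h : H) : counit (R := k) (τ h) = g h := counit_act_comul g.toLinearMap h
  obtain ⟨s, hs, hsa⟩ := exists_counit_eq_zero_and_mul_eq_self (k := k) (ha.map τ)
  refine ⟨τ.symm s, by rw [← hτ, τ.apply_symm_apply, hs], τ.injective ?_⟩
  rw [map_mul, τ.apply_symm_apply, hsa]

end Cartier

section Nullstellensatz

variable {k A : Type*} [Field k] [IsAlgClosed k] [CommRing A] [Algebra k A]
  [Algebra.FiniteType k A]

theorem exists_algHom_ker_eq (M : Ideal A) [hM : M.IsMaximal] :
    ∃ g : A →ₐ[k] k, RingHom.ker g = M := by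
  let := Ideal.Quotient.field M
  have := finite_of_finite_type_of_isJacobsonRing k (A ⧸ M)
  let e := AlgEquiv.ofBijective (Algebra.ofId k (A ⧸ M))
    IsAlgClosed.algebraMap_bijective_of_isIntegral
  refine ⟨e.symm.toAlgHom.comp (Ideal.Quotient.mkₐ k M), ?_⟩
  ext a
  simp [RingHom.mem_ker, Ideal.Quotient.eq_zero_iff_mem]

theorem eq_zero_of_forall_algHom_eq_zero [IsReduced A] {a : A} (ha : ∀ g : A →ₐ[k] k, g a = 0) :
    a = 0 := by
  have := isJacobsonRing_of_finiteType (A := k) (B := A)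
  refine IsNilpotent.eq_zero (mem_nilradical.1 ?_)
  rw [nilradical, Ideal.radical_eq_jacobson, Ideal.jacobson, Ideal.mem_sInf]
  rintro M ⟨-, hM⟩
  obtain ⟨g, rfl⟩ := exists_algHom_ker_eq (k := k) M
  exact ha g

end Nullstellensatz

theorem isReduced_of_hopfAlgebra (k H : Type*) [Field k] [CharZero k] [IsAlgClosed k] [CommRing H]
    [HopfAlgebra k H] [Algebra.FiniteType k H] : IsReduced H where
  eq_zero a ha := by
    have := Algebra.FiniteType.isNoetherianRing k H
    by_contra hne
    obtain ⟨M, hM, hle⟩ := Ideal.exists_le_maximal (Ideal.span {a}).annihilator fun h =>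
      hne (by simpa using (Ideal.eq_top_iff_one _).1 h)
    obtain ⟨g, rfl⟩ := exists_algHom_ker_eq (k := k) M
    obtain ⟨s, hs, hsa⟩ := exists_point_eq_zero_and_mul_eq_self g ha
    have hmem : 1 - s ∈ RingHom.ker g :=
      hle ((Submodule.mem_annihilator_span_singleton _ _).2 (by simp [sub_mul, hsa]))
    simp [RingHom.mem_ker, hs] at hmem

theorem eq_zero_of_forall_contract_eq_zero {k V A : Type*} [Field k] [AddCommGroup V] [Module k V]
    [AddCommGroup A] [Module k A] {S : Set (A →ₗ[k] k)} (hS : ∀ a, (∀ f ∈ S, f a = 0) → a = 0)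
    {z : V ⊗[k] A} (hz : ∀ f ∈ S, contract V f z = 0) : z = 0 := by
  classical
  let b := Module.Basis.ofVectorSpace k V
  apply (TensorProduct.equivFinsuppOfBasisLeft b).injective
  rw [map_zero]
  ext i
  refine hS _ fun f hf => ?_
  have hcoord : f (TensorProduct.equivFinsuppOfBasisLeft b z i) = b.repr (contract V f z) i := by
    clear hz
    induction z with
    | zero => simp
    | add z₁ z₂ h₁ h₂ => simp only [map_add, Finsupp.add_apply, h₁, h₂]
    | tmul v a => simp [mul_comm]
  rw [hcoord, hz f hf, map_zero, Finsupp.zero_apply]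

section MaxDiffIdeal

variable {R S : Type*} [CommRing R] [CommRing S]

theorem exists_isMaxDiffIdeal [Nontrivial R] {D : R → R} (hD : D 0 = 0) :
    ∃ m : Ideal R, IsMaxDiffIdeal D m := by
  obtain ⟨m, -, hm⟩ := zorn_le_nonempty₀ {I : Ideal R | I ≠ ⊤ ∧ ∀ a ∈ I, D a ∈ I}
    (fun c hc hchain I₀ hI₀ => by
      have mem_sSup {a : R} : a ∈ sSup c ↔ ∃ I ∈ c, a ∈ I :=
        Submodule.mem_sSup_of_directed ⟨I₀, hI₀⟩ hchain.directedOn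
      refine ⟨sSup c, ⟨fun htop => ?_, fun a ha => ?_⟩, fun I => le_sSup⟩
      · obtain ⟨I, hI, h1⟩ := mem_sSup.1 ((Ideal.eq_top_iff_one _).1 htop)
        exact (hc hI).1 ((Ideal.eq_top_iff_one I).2 h1)
      · obtain ⟨I, hI, haI⟩ := mem_sSup.1 ha
        exact mem_sSup.2 ⟨I, hI, (hc hI).2 a haI⟩)
    ⊥ ⟨bot_ne_top, by simp [hD]⟩
  exact ⟨m, hm.prop.1, hm.prop.2, fun J hJ hmJ hJt => (hm.eq_of_le ⟨hJt, hJ⟩ hmJ).symm⟩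

theorem isMaxDiffIdeal_comap {D : R → R} {D' : S → S} (e : R ≃+* S)
    (he : ∀ a, e (D a) = D' (e a)) {m : Ideal S} (hm : IsMaxDiffIdeal D' m) :
    IsMaxDiffIdeal D (m.comap e) := by
  obtain ⟨hne, hstable, hmax⟩ := hm
  refine ⟨Ideal.comap_ne_top e hne, fun a ha => ?_, fun J hJ hle hJne => ?_⟩
  · rw [Ideal.mem_comap, he]
    exact hstable _ ha
  · have he_symm (b : S) : e.symm (D' b) = D (e.symm b) := by simp [RingEquiv.symm_apply_eq, he]
    have hm_eq : J.comap e.symm = m := by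
      refine hmax _ (fun b hb => ?_) (fun b hb => ?_) (Ideal.comap_ne_top e.symm hJne)
      · rw [Ideal.mem_comap, he_symm]
        exact hJ _ hb
      · exact Ideal.mem_comap.2 (hle (by rwa [Ideal.mem_comap, e.apply_symm_apply]))
    ext a
    simp [← hm_eq, Ideal.mem_comap]

end MaxDiffIdeal

theorem eq_zero_of_one_tmul_mem_map_includeLeft {K A B : Type*} [Field K] [CommRing A]
    [Algebra K A] [CommRing B] [Algebra K B] {I : Ideal A} (hI : I ≠ ⊤) {b : B}
    (hb : 1 ⊗ₜ b ∈ I.map (Algebra.TensorProduct.includeLeft : A →ₐ[K] A ⊗[K] B)) : b = 0 := by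
  have : Nontrivial (A ⧸ I) := Ideal.Quotient.nontrivial_iff.2 hI
  have hker : I.map (Algebra.TensorProduct.includeLeft : A →ₐ[K] A ⊗[K] B) ≤
      RingHom.ker (Algebra.TensorProduct.map (Ideal.Quotient.mkₐ K I) (.id K B)) := by
    rw [Ideal.map_le_iff_le_comap]
    intro a ha
    simp [RingHom.mem_ker, Ideal.Quotient.eq_zero_iff_mem.2 ha]
  refine Algebra.TensorProduct.includeRight_injective (algebraMap K (A ⧸ I)).injective ?_
  simpa using hker hb

theorem eq_zero_of_rTensor_mk_eq_zero_of_torsor {k K R H : Type*} [Field k] [Field K] [CommRing H]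
    [Algebra k H] [CommRing R] [Algebra K R] [Algebra k R] [Algebra k K] [IsScalarTower k K R]
    {ρ : R →ₐ[K] R ⊗[k] H}
    (htorsor : Function.Bijective
      (Algebra.TensorProduct.productMap
        (Algebra.TensorProduct.includeLeft : R →ₐ[K] R ⊗[k] H) ρ))
    {m : Ideal R} (hm : m ≠ ⊤) {r : R}
    (hr : (Ideal.Quotient.mkₐ k m).toLinearMap.rTensor H (ρ r) = 0) : r = 0 := by
  let Φ := AlgEquiv.ofBijective _ htorsor
  have hΦ_left (a : R) : Φ.symm (a ⊗ₜ 1) = a ⊗ₜ 1 := by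
    rw [AlgEquiv.symm_apply_eq]
    simp [Φ]
  have hΦ_coaction : Φ.symm (ρ r) = 1 ⊗ₜ r := by
    rw [AlgEquiv.symm_apply_eq]
    simp [Φ, ← Algebra.TensorProduct.one_def]
  have hmem : ρ r ∈ m.map (Algebra.TensorProduct.includeLeft : R →ₐ[k] R ⊗[k] H) := by
    have hker : RingHom.ker (Ideal.Quotient.mkₐ k m) = m := Ideal.Quotient.mkₐ_ker k m
    rw [← hker, ← Algebra.TensorProduct.rTensor_ker _ (Ideal.Quotient.mkₐ_surjective k m)]
    exact hr
  have hle : m.map (Algebra.TensorProduct.includeLeft : R →ₐ[k] R ⊗[k] H) ≤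
      (m.map (Algebra.TensorProduct.includeLeft : R →ₐ[K] R ⊗[K] R)).comap Φ.symm := by
    rw [Ideal.map_le_iff_le_comap]
    intro a ha
    simpa [Ideal.mem_comap, hΦ_left] using Ideal.mem_map_of_mem
      (Algebra.TensorProduct.includeLeft : R →ₐ[K] R ⊗[K] R) ha
  refine eq_zero_of_one_tmul_mem_map_includeLeft (K := K) hm ?_
  rw [← hΦ_coaction]
  exact hle hmem

end DifferentialTorsor

open DifferentialTorsor in
theorem sInf_maxDiffIdeals_eq_bot_of_differential_torsor_general {k K H R : Type*} [Field k]
    [IsAlgClosed k] [CharZero k] [Field K] [Algebra k K] [CommRing H] [HopfAlgebra k H]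
    [Algebra.FiniteType k H] [CommRing R] [Nontrivial R] [Algebra K R] [Algebra k R]
    [IsScalarTower k K R] (D : R →ₗ[k] R) (ρ : R →ₐ[K] R ⊗[k] H)
    (hρ : IsCoaction (ρ.restrictScalars k).toLinearMap)
    (hD : ∀ r, ρ (D r) = D.rTensor H (ρ r))
    (htorsor : Function.Bijective
      (Algebra.TensorProduct.productMap
        (Algebra.TensorProduct.includeLeft : R →ₐ[K] R ⊗[k] H) ρ)) :
    sInf {I : Ideal R | IsMaxDiffIdeal D I} = ⊥ := by
  have := isReduced_of_hopfAlgebra k H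
  obtain ⟨m, hm⟩ := exists_isMaxDiffIdeal (map_zero D)
  refine eq_bot_iff.2 fun r hr => eq_zero_of_rTensor_mk_eq_zero_of_torsor htorsor hm.1 ?_
  refine eq_zero_of_forall_contract_eq_zero (S := Set.range AlgHom.toLinearMap)
    (fun h hh => eq_zero_of_forall_algHom_eq_zero (k := k) fun g => hh _ ⟨g, rfl⟩) ?_
  rintro _ ⟨g, rfl⟩
  let σ := pointEquiv hρ (WithConv.toConv g)
  have hσ_comm (a : R) : σ (D a) = D (σ a) := by
    simpa only [σ, pointEquiv_apply] using act_comm_of_equivariant hD g.toLinearMap a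
  have hσr : σ r ∈ m := Ideal.mem_sInf.1 hr (isMaxDiffIdeal_comap σ.toRingEquiv hσ_comm hm)
  rw [contract_rTensor]
  exact Ideal.Quotient.eq_zero_iff_mem.2 hσr

/-- **In a differential torsor over `k(x)` the maximal differential ideals intersect in `0`.**
Let `k` be an algebraically closed field of characteristic zero and equip `k(x)` with the
derivation `d/dx` (the unique derivation `Dx` killing `k` with `Dx x = 1`).  Let `H` be a
finitely generated commutative Hopf algebra over `k` and let `R` be a nonzero `k(x)`-algebra
with a derivation `D` extending `d/dx` (`D` is `k`-linear automatically, and is here bundled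
as a `k`-linear map).  Suppose `ρ : R → R ⊗_k H` is a `k(x)`-algebra homomorphism satisfying
(i) the comodule axioms, (ii) compatibility with the derivation `ρ ∘ D = (D ⊗ id) ∘ ρ`, and
(iii) the torsor condition that `R ⊗_{k(x)} R → R ⊗_k H, a ⊗ b ↦ (a ⊗ 1)·ρ(b)` is bijective.
Then the intersection of all maximal differential ideals of `R` is the zero ideal. -/
theorem sInf_maxDiffIdeals_eq_bot_of_differential_torsor
    (k : Type*) [Field k] [IsAlgClosed k] [CharZero k]
    (H : Type*) [CommRing H] [HopfAlgebra k H] [Algebra.FiniteType k H]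
    (R : Type*) [CommRing R] [Nontrivial R] [Algebra (RatFunc k) R]
    [Algebra k R] [IsScalarTower k (RatFunc k) R]
    -- the derivation `d/dx` on `k(x)`
    (Dx : RatFunc k → RatFunc k) (hDx : IsDerivationFun Dx)
    (hDxC : ∀ a : k, Dx (RatFunc.C a) = 0) (hDxX : Dx RatFunc.X = 1)
    -- the derivation `D` of `R` extending `d/dx`
    (D : R →ₗ[k] R)
    (hLeib : ∀ a b : R, D (a * b) = a * D b + D a * b)
    (hext : ∀ q : RatFunc k, D (algebraMap (RatFunc k) R q) = algebraMap (RatFunc k) R (Dx q))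
    -- the coaction `ρ`, a `k(x)`-algebra homomorphism, with its `k`-linear realization `ρₖ`
    (ρ : R →ₐ[RatFunc k] R ⊗[k] H)
    (ρₖ : R →ₗ[k] R ⊗[k] H) (hρₖ : ∀ r : R, ρₖ r = ρ r)
    -- (i) comodule axioms
    (hcoassoc : ∀ r : R,
      (TensorProduct.assoc k R H H)
          ((TensorProduct.map ρₖ (LinearMap.id : H →ₗ[k] H)) (ρ r)) =
        (TensorProduct.map (LinearMap.id : R →ₗ[k] R) Coalgebra.comul) (ρ r))
    (hcounit : ∀ r : R,
      (TensorProduct.map (LinearMap.id : R →ₗ[k] R) (Coalgebra.counit (R := k) (A := H)))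
          (ρ r) = r ⊗ₜ[k] (1 : k))
    -- (ii) compatibility with the derivation (`H` consists of constants)
    (hder : ∀ r : R, ρ (D r) = (TensorProduct.map D (LinearMap.id : H →ₗ[k] H)) (ρ r))
    -- (iii) the torsor condition
    (htorsor : Function.Bijective
      (Algebra.TensorProduct.productMap
        (Algebra.TensorProduct.includeLeft : R →ₐ[RatFunc k] R ⊗[k] H) ρ)) :
    sInf {I : Ideal R | IsMaxDiffIdeal (⇑D) I} = ⊥ := by
  obtain rfl : ρₖ = (ρ.restrictScalars k).toLinearMap := LinearMap.ext hρₖ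
  exact sInf_maxDiffIdeals_eq_bot_of_differential_torsor_general D ρ ⟨hcoassoc, hcounit⟩ hder
    htorsor
end

section
/- Let k be an algebraically closed field of characteristic zero, F a differential field with field of constants F^δ = k, and H a finitely generated commutative Hopf algebra over k. Let R be a differential F-algebra that is an integral domain and finitely generated as an F-algebra, equipped with a differential torsor structure: a k-algebra constant-compatible F-algebra homomorphism ρ : R → R ⊗_k H satisfying the comodule axioms ((ρ ⊗ id_H)∘ρ = (id_R ⊗ Δ)∘ρ, (id_R ⊗ ε)∘ρ = id_R), compatible with the derivation (ρ∘δ = (δ ⊗ id_H)∘ρ), and such that the map R ⊗_F R → R ⊗_k H, a ⊗ b ↦ (a ⊗ 1)·ρ(b), is bijective. For a k-algebra homomorphism g : H → k, let g·(−) denote the differential F-algebra automorphism (id_R ⊗ g)∘ρ of R. Then for any two maximal differential ideals 𝔪 and 𝔪' of R there exists a k-algebra homomorphism g : H → k such that 𝔪' = g·(𝔪) (the image of 𝔪 under this automorphism). -/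
open scoped TensorProduct

/-!
Given maximal differential ideals `𝔪` and `𝔪'`, the torsor isomorphism `R ⊗_F R ≃ R ⊗_k H` turns
`(R ⧸ 𝔪') ⊗_F (R ⧸ 𝔪) ≠ 0` into the properness of the ideal generated by `𝔪' ⊗ 1` and `ρ(𝔪)`. Choose
a maximal differential ideal `J` of `R ⊗_k H` above it, so that by maximality `𝔪'` and `𝔪` are the
preimages of `J` under `r ↦ r ⊗ 1` and `ρ`. The elements of `H` are constants, so the key point is
that every constant `c` of the differentially simple, finitely generated algebra `(R ⊗_k H) ⧸ J`
lies in `k`. Since nonzero constants are units there, `c - a` only has to be a non-unit for some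
`a ∈ k`. If `c` is transcendental over `F`, Chevalley's theorem makes `c - a` a non-unit for all but
finitely many `a`; otherwise the minimal polynomial of `c` has constant coefficients, so `c` is
algebraic over the algebraically closed field `k`. Hence `H → (R ⊗_k H) ⧸ J` is a `k`-point `g`, and
`J` is determined by its preimage under `r ↦ r ⊗ 1` together with `g`; reading off the preimage
under `ρ` gives `𝔪 = g⁻¹(𝔪')`. Finally `g` acts surjectively, its inverse being the action of the
convolution inverse.
-/

section ChevalleySpectrum

open Polynomial

theorem exists_basicOpen_subset_of_isConstructible {A : Type*} [CommRing A] [IsDomain A]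
    {s : Set (PrimeSpectrum A)} (hs : Topology.IsConstructible s) (hbot : ⊥ ∈ s) :
    ∃ a : A, a ≠ 0 ∧ (PrimeSpectrum.basicOpen a : Set (PrimeSpectrum A)) ⊆ s := by
  obtain ⟨T, rfl⟩ := PrimeSpectrum.exists_constructibleSetData_iff.mpr hs
  simp only [PrimeSpectrum.ConstructibleSetData.toSet, Set.mem_iUnion] at hbot
  obtain ⟨B, hBT, hg, hf⟩ := hbot
  have hg_zero (i) : B.g i = 0 := by simpa using hg ⟨i, rfl⟩
  have hf_ne : B.f ≠ 0 := by rintro h; simp [h] at hf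
  refine ⟨B.f, hf_ne, fun x hx ↦ Set.mem_biUnion hBT ⟨?_, ?_⟩⟩
  · rintro _ ⟨i, rfl⟩
    simp [hg_zero]
  · simpa [PrimeSpectrum.mem_zeroLocus] using hx

theorem exists_basicOpen_subset_range_comap {A B : Type*} [CommRing A] [IsDomain A] [CommRing B]
    {φ : A →+* B} (hφ : φ.FinitePresentation) (hinj : Function.Injective φ) :
    ∃ a : A, a ≠ 0 ∧
      (PrimeSpectrum.basicOpen a : Set (PrimeSpectrum A)) ⊆ Set.range (PrimeSpectrum.comap φ) := by
  obtain ⟨P, hP, hP_comap⟩ := Ideal.exists_comap_eq_of_mem_minimalPrimes_of_injective hinj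
    (⊥ : Ideal A) (by simp [IsDomain.minimalPrimes_eq_singleton_bot])
  exact exists_basicOpen_subset_of_isConstructible
    (PrimeSpectrum.isConstructible_range_comap hφ) ⟨⟨P, hP⟩, PrimeSpectrum.ext hP_comap⟩

theorem finite_compl_spectrum_of_transcendental {F S : Type*} [Field F] [CommRing S] [Algebra F S]
    [Algebra.FiniteType F S] {c : S} (hc : Transcendental F c) : (spectrum F c)ᶜ.Finite := by
  set φ : F[X] →+* S := (aeval c : F[X] →ₐ[F] S).toRingHom
  have hφ_fp : φ.FinitePresentation := by
    refine RingHom.FinitePresentation.of_finiteType.mp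
      (RingHom.FiniteType.of_comp_finiteType (f := (C : F →+* F[X])) ?_)
    rw [show φ.comp C = algebraMap F S from (aeval c).comp_algebraMap]
    exact RingHom.finiteType_algebraMap.mpr inferInstance
  obtain ⟨f, hf_ne, hf⟩ :=
    exists_basicOpen_subset_range_comap hφ_fp (transcendental_iff_injective.mp hc)
  refine (finite_setOfPred_isRoot hf_ne).subset fun a ha ↦ by_contra fun hfa ↦ ha ?_
  have hprime : (Ideal.span {X - C a}).IsPrime :=
    (Ideal.span_singleton_prime (X_sub_C_ne_zero a)).mpr (prime_X_sub_C a)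
  obtain ⟨Q, hQ⟩ := @hf ⟨_, hprime⟩ fun h ↦
    hfa (dvd_iff_isRoot.mp (Ideal.mem_span_singleton.mp h))
  have hQ_mem : φ (X - C a) ∈ Q.asIdeal := by
    rw [← Ideal.mem_comap, ← PrimeSpectrum.comap_asIdeal, hQ]
    exact Ideal.mem_span_singleton_self _
  rw [spectrum.mem_iff, ← IsUnit.sub_iff]
  exact fun hu ↦ Q.2.ne_top (Ideal.eq_top_of_isUnit_mem _ (by simpa [φ] using hQ_mem) hu)

theorem spectrum_nonempty_of_isAlgebraic {k S : Type*} [Field k] [IsAlgClosed k] [Ring S]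
    [Nontrivial S] [Algebra k S] {c : S} (hc : IsAlgebraic k c) : (spectrum k c).Nonempty := by
  obtain ⟨p, hp_ne, hp⟩ := hc
  rw [(IsAlgClosed.splits p).eq_prod_roots, ← smul_eq_C_mul, map_smul] at hp
  obtain ⟨a, ha, -⟩ := spectrum.exists_mem_of_not_isUnit_aeval_prod (p := p) (a := c) <| by
    rw [(smul_eq_zero_iff_right (leadingCoeff_ne_zero.mpr hp_ne)).mp hp]
    exact not_isUnit_zero
  exact ⟨a, ha⟩

end ChevalleySpectrum

section DifferentialField

open Polynomial Differential

variable {F S : Type*} [Field F] [Differential F] [CommRing S] [Differential S] [Algebra F S]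
  [DifferentialAlgebra F S]

theorem deriv_coeff_minpoly_eq_zero {c : S} (hint : IsIntegral F c) (hc : c′ = 0) (i : ℕ) :
    ((minpoly F c).coeff i)′ = 0 := by
  have hroot : aeval c (mapCoeffs (minpoly F c)) = 0 := by
    simpa [hc] using (deriv_aeval_eq c (minpoly F c)).symm
  have hdegree : (mapCoeffs (minpoly F c)).degree < (minpoly F c).degree := by
    rw [degree_eq_natDegree (minpoly.ne_zero hint), degree_lt_iff_coeff_zero]
    intro j hj
    rcases hj.eq_or_lt with rfl | hj
    · simp [(minpoly.monic hint).coeff_natDegree]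
    · simp [coeff_eq_zero_of_natDegree_lt hj]
  have hzero : mapCoeffs (minpoly F c) = 0 := by
    by_contra hne
    exact (minpoly.degree_le_of_ne_zero F c hne hroot).not_gt hdegree
  rw [← coeff_mapCoeffs, hzero, coeff_zero]

theorem isAlgebraic_constants_of_deriv_eq_zero {k : Type*} [Field k] [Algebra k F] [Algebra k S]
    [IsScalarTower k F S] [ContainConstants k F] {c : S} (halg : IsAlgebraic F c) (hc : c′ = 0) :
    IsAlgebraic k c := by
  have hint := halg.isIntegral
  obtain ⟨p, hp⟩ : minpoly F c ∈ lifts (algebraMap k F) :=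
    (lifts_iff_coeff_lifts _).mpr fun i ↦
      mem_range_of_deriv_eq_zero k (deriv_coeff_minpoly_eq_zero hint hc i)
  refine ⟨p, ?_, ?_⟩
  · rintro rfl
    exact minpoly.ne_zero hint (by simpa using hp.symm)
  · rw [← aeval_map_algebraMap F, ← coe_mapRingHom, hp, minpoly.aeval]

end DifferentialField

section DiffIdeal

/-- A differential ideal: an ideal stable under `δ`. As in `IsMaxDiffIdeal`, `δ` is a bare function;
that it is a derivation is assumed only where it matters. -/
def IsDiffIdeal {R : Type*} [CommRing R] (δ : R → R) (I : Ideal R) : Prop :=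
  ∀ a ∈ I, δ a ∈ I

variable {R T : Type*} [CommRing R] [CommRing T]

theorem IsMaxDiffIdeal.isDiffIdeal {δ : R → R} {I : Ideal R} (hI : IsMaxDiffIdeal δ I) :
    IsDiffIdeal δ I :=
  hI.2.1

theorem IsMaxDiffIdeal.eq_of_le {δ : R → R} {I J : Ideal R} (hI : IsMaxDiffIdeal δ I)
    (hJ : IsDiffIdeal δ J) (hIJ : I ≤ J) (hJ_ne : J ≠ ⊤) : J = I :=
  hI.2.2 J hJ hIJ hJ_ne

theorem IsDiffIdeal.comap {δ : R → R} {d : T → T} {f : R →+* T} (hf : ∀ r, f (δ r) = d (f r))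
    {J : Ideal T} (hJ : IsDiffIdeal d J) : IsDiffIdeal δ (J.comap f) := fun a ha ↦ by
  simpa only [Ideal.mem_comap, hf] using hJ _ ha

theorem IsDiffIdeal.sSup_of_directedOn {δ : R → R} {c : Set (Ideal R)} (hne : c.Nonempty)
    (hdir : DirectedOn (· ≤ ·) c) (hc : ∀ I ∈ c, IsDiffIdeal δ I) : IsDiffIdeal δ (sSup c) := by
  intro a ha
  rw [Submodule.mem_sSup_of_directed hne hdir] at ha ⊢
  obtain ⟨I, hI, haI⟩ := ha
  exact ⟨I, hI, hc I hI a haI⟩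

theorem IsDiffIdeal.exists_le_isMaxDiffIdeal {δ : R → R} {I : Ideal R} (hI : IsDiffIdeal δ I)
    (hI_ne : I ≠ ⊤) : ∃ J : Ideal R, I ≤ J ∧ IsMaxDiffIdeal δ J := by
  have hchains : ∀ c ⊆ {K : Ideal R | K ≠ ⊤ ∧ IsDiffIdeal δ K}, IsChain (· ≤ ·) c → c.Nonempty →
      sSup c ≠ ⊤ ∧ IsDiffIdeal δ (sSup c) := by
    intro c hc hchain hne
    refine ⟨?_, .sSup_of_directedOn hne hchain.directedOn fun L hL ↦ (hc hL).2⟩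
    rw [Ideal.ne_top_iff_one, Submodule.mem_sSup_of_directed hne hchain.directedOn]
    rintro ⟨L, hL, h_one⟩
    exact (hc hL).1 ((Ideal.eq_top_iff_one L).mpr h_one)
  obtain ⟨J, hIJ, hJ⟩ := zorn_le_nonempty₀ {K : Ideal R | K ≠ ⊤ ∧ IsDiffIdeal δ K}
    (fun c hc hchain K hK ↦ ⟨sSup c, hchains c hc hchain ⟨K, hK⟩, fun _ ↦ le_sSup⟩) I ⟨hI_ne, hI⟩
  exact ⟨J, hIJ, hJ.prop.1, hJ.prop.2, fun K hK hJK hK_ne ↦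
    (hJ.le_of_ge ⟨hK_ne, hK⟩ hJK).antisymm hJK⟩

variable {k : Type*} [CommSemiring k] [Algebra k T] {d : Derivation k T T}

theorem IsDiffIdeal.sup {I J : Ideal T} (hI : IsDiffIdeal d I) (hJ : IsDiffIdeal d J) :
    IsDiffIdeal d (I ⊔ J) := fun a ha ↦ by
  obtain ⟨x, hx, y, hy, rfl⟩ := Submodule.mem_sup.mp ha
  rw [map_add]
  exact add_mem (Ideal.mem_sup_left (hI x hx)) (Ideal.mem_sup_right (hJ y hy))

theorem IsDiffIdeal.span {s : Set T} (hs : ∀ x ∈ s, d x ∈ Ideal.span s) :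
    IsDiffIdeal d (Ideal.span s) := fun a ha ↦ by
  induction ha using Submodule.span_induction with
  | mem x hx => exact hs x hx
  | zero => simp
  | add x y _ _ hx hy => simpa only [map_add] using add_mem hx hy
  | smul t x hx hdx =>
    rw [smul_eq_mul, d.leibniz]
    exact add_mem (Ideal.mul_mem_left _ _ hdx) (Ideal.mul_mem_right _ _ hx)

theorem IsDiffIdeal.map {δ : R → R} {f : R →+* T} (hf : ∀ r, f (δ r) = d (f r)) {I : Ideal R}
    (hI : IsDiffIdeal δ I) : IsDiffIdeal d (I.map f) := by
  refine IsDiffIdeal.span ?_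
  rintro _ ⟨r, hr, rfl⟩
  exact hf r ▸ Ideal.mem_map_of_mem f (hI r hr)

theorem IsMaxDiffIdeal.comap_eq {δ : R → R} {δ' : T → T} {f : R →+* T}
    (hf : ∀ r, f (δ r) = δ' (f r)) {I : Ideal R} (hI : IsMaxDiffIdeal δ I) {J : Ideal T}
    (hJ : IsDiffIdeal δ' J) (hJ_ne : J ≠ ⊤) (hle : I.map f ≤ J) : J.comap f = I :=
  hI.eq_of_le (hJ.comap hf) (Ideal.map_le_iff_le_comap.mp hle) (Ideal.comap_ne_top f hJ_ne)

theorem IsMaxDiffIdeal.exists_comap_eq_comap_eq {R' : Type*} [CommRing R'] {δ : R → R}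
    {δ' : R' → R'} {f : R →+* T} {f' : R' →+* T} (hf : ∀ r, f (δ r) = d (f r))
    (hf' : ∀ r, f' (δ' r) = d (f' r)) {I : Ideal R} {I' : Ideal R'} (hI : IsMaxDiffIdeal δ I)
    (hI' : IsMaxDiffIdeal δ' I') (hne : I.map f ⊔ I'.map f' ≠ ⊤) :
    ∃ J : Ideal T, IsMaxDiffIdeal d J ∧ J.comap f = I ∧ J.comap f' = I' := by
  obtain ⟨J, hle, hJ⟩ :=
    ((hI.isDiffIdeal.map hf).sup (hI'.isDiffIdeal.map hf')).exists_le_isMaxDiffIdeal hne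
  exact ⟨J, hJ, hI.comap_eq hf hJ.isDiffIdeal hJ.1 (le_sup_left.trans hle),
    hI'.comap_eq hf' hJ.isDiffIdeal hJ.1 (le_sup_right.trans hle)⟩

theorem IsMaxDiffIdeal.isUnit_of_constant (hd : IsMaxDiffIdeal d ⊥) {x : T} (hx : d x = 0)
    (hx_ne : x ≠ 0) : IsUnit x := by
  by_contra hu
  have hspan : Ideal.span {x} = ⊥ := hd.eq_of_le
    (IsDiffIdeal.span (by simp [hx])) bot_le (by rwa [Ne, Ideal.span_singleton_eq_top])
  exact hx_ne (Ideal.span_singleton_eq_bot.mp hspan)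

end DiffIdeal

section Quotient

variable {k T : Type*} [CommRing k] [CommRing T] [Algebra k T] (d : Derivation k T T) {J : Ideal T}

theorem IsDiffIdeal.mk_eq_zero (hJ : IsDiffIdeal d J) (x : T) (hx : Ideal.Quotient.mkₐ k J x = 0) :
    Ideal.Quotient.mkₐ k J (d x) = 0 :=
  Ideal.Quotient.eq_zero_iff_mem.mpr (hJ x (Ideal.Quotient.eq_zero_iff_mem.mp hx))

/-- The derivation induced on the quotient by a differential ideal. -/
noncomputable def quotientDerivation (hJ : IsDiffIdeal d J) : Derivation k (T ⧸ J) (T ⧸ J) :=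
  Derivation.liftOfSurjective (Ideal.Quotient.mkₐ_surjective k J) (hJ.mk_eq_zero d)

theorem quotientDerivation_mk (hJ : IsDiffIdeal d J) (x : T) :
    quotientDerivation d hJ (Ideal.Quotient.mk J x) = Ideal.Quotient.mk J (d x) :=
  Derivation.liftOfSurjective_apply (Ideal.Quotient.mkₐ_surjective k J) (hJ.mk_eq_zero d) x

variable {d} in
theorem IsMaxDiffIdeal.bot_quotient (hJ : IsMaxDiffIdeal d J) :
    IsMaxDiffIdeal (quotientDerivation d hJ.isDiffIdeal) ⊥ := by
  have : Nontrivial (T ⧸ J) := Ideal.Quotient.nontrivial_iff.mpr hJ.1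
  refine ⟨bot_ne_top, fun a ha ↦ ?_, fun K hK _ hK_ne ↦ ?_⟩
  · simp_all
  · have hcomap : K.comap (Ideal.Quotient.mk J) = J :=
      hJ.eq_of_le (IsDiffIdeal.comap (fun x ↦ (quotientDerivation_mk d _ x).symm) hK)
        (fun x hx ↦ by simp [Ideal.Quotient.eq_zero_iff_mem.mpr hx])
        (Ideal.comap_ne_top _ hK_ne)
    rw [← Ideal.map_comap_of_surjective _ Ideal.Quotient.mk_surjective K, hcomap,
      Ideal.map_quotient_self]

end Quotient

section Constants

variable {k F : Type*} [Field k] [IsAlgClosed k] [Field F] [Algebra k F] {δ : Derivation ℤ F F}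
  (hconst : ∀ x : F, δ x = 0 → x ∈ (algebraMap k F).range)

include hconst

theorem spectrum_nonempty_of_constant {S : Type*} [CommRing S] [Nontrivial S] [Algebra F S]
    [Algebra.FiniteType F S] [Algebra k S] [IsScalarTower k F S] {d : Derivation k S S}
    (hext : ∀ a : F, d (algebraMap F S a) = algebraMap F S (δ a)) {c : S} (hc : d c = 0) :
    (spectrum k c).Nonempty := by
  by_cases halg : IsAlgebraic F c
  · let : Differential F := ⟨δ⟩
    let : Differential S := ⟨d.restrictScalars ℤ⟩
    have : DifferentialAlgebra F S := ⟨hext⟩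
    have : Differential.ContainConstants k F := ⟨hconst _⟩
    exact spectrum_nonempty_of_isAlgebraic (isAlgebraic_constants_of_deriv_eq_zero halg hc)
  · have : Infinite k := IsAlgClosed.instInfinite
    have hk : (Set.range (algebraMap k F)).Infinite :=
      Set.infinite_range_of_injective (algebraMap k F).injective
    obtain ⟨_, ⟨a, rfl⟩, ha⟩ :=
      hk.exists_notMem_finite (finite_compl_spectrum_of_transcendental halg)
    refine ⟨a, ?_⟩
    rwa [Set.notMem_compl_iff, spectrum.algebraMap_mem_iff] at ha

theorem IsMaxDiffIdeal.constant_mem_range_algebraMap {S : Type*} [CommRing S] [Algebra F S]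
    [Algebra.FiniteType F S] [Algebra k S] [IsScalarTower k F S] {d : Derivation k S S}
    (hext : ∀ a : F, d (algebraMap F S a) = algebraMap F S (δ a))
    (hd : IsMaxDiffIdeal d ⊥) {c : S} (hc : d c = 0) : c ∈ (algebraMap k S).range := by
  have : Nontrivial S := (Submodule.nontrivial_iff S).mp ⟨⊥, ⊤, hd.1⟩
  obtain ⟨a, ha⟩ := spectrum_nonempty_of_constant hconst hext hc
  refine ⟨a, sub_eq_zero.mp (by_contra fun hne ↦ ha (hd.isUnit_of_constant ?_ hne))⟩
  simp [hc]

theorem IsMaxDiffIdeal.mk_constant_mem_range_algebraMap {T : Type*} [CommRing T] [Algebra F T]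
    [Algebra.FiniteType F T] [Algebra k T] [IsScalarTower k F T] {d : Derivation k T T}
    (hext : ∀ a : F, d (algebraMap F T a) = algebraMap F T (δ a)) {J : Ideal T}
    (hJ : IsMaxDiffIdeal d J) {c : T} (hc : d c = 0) :
    Ideal.Quotient.mk J c ∈ (algebraMap k (T ⧸ J)).range := by
  refine hJ.bot_quotient.constant_mem_range_algebraMap hconst (fun a ↦ ?_) ?_
  · exact (quotientDerivation_mk d _ _).trans (congrArg _ (hext a))
  · rw [quotientDerivation_mk, hc, map_zero]

end Constants

section Coaction

open LinearMap

variable {k H M : Type*} [CommSemiring k] [AddCommMonoid H] [Module k H] [Coalgebra k H]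
  [AddCommMonoid M] [Module k M]

/-- `ρ` makes `M` a right `H`-comodule: it is coassociative and counital. -/
structure IsCoaction (ρ : M →ₗ[k] M ⊗[k] H) : Prop where
  coassoc (m : M) : TensorProduct.assoc k M H H (TensorProduct.map ρ LinearMap.id (ρ m)) =
    TensorProduct.map LinearMap.id Coalgebra.comul (ρ m)
  counit (m : M) : TensorProduct.map LinearMap.id Coalgebra.counit (ρ m) = m ⊗ₜ[k] (1 : k)

/-- The action `(id ⊗ f) ∘ ρ` on an `H`-comodule of a linear functional `f` on `H`; functionals
multiply by convolution. -/
noncomputable def coactionEnd (ρ : M →ₗ[k] M ⊗[k] H) (f : WithConv (H →ₗ[k] k)) : Module.End k M :=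
  (TensorProduct.rid k M).toLinearMap ∘ₗ f.ofConv.lTensor M ∘ₗ ρ

theorem IsCoaction.coactionEnd_one {ρ : M →ₗ[k] M ⊗[k] H} (hρ : IsCoaction ρ) :
    coactionEnd ρ 1 = 1 := by
  ext m
  have hone : (1 : WithConv (H →ₗ[k] k)).ofConv = Coalgebra.counit := by
    ext
    simp [LinearMap.convOne_def]
  simp only [coactionEnd, hone, comp_apply, lTensor, hρ.counit]
  simp

theorem IsCoaction.coactionEnd_mul {ρ : M →ₗ[k] M ⊗[k] H} (hρ : IsCoaction ρ)
    (f g : WithConv (H →ₗ[k] k)) :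
    coactionEnd ρ (f * g) = coactionEnd ρ f * coactionEnd ρ g := by
  set contract : M ⊗[k] (H ⊗[k] H) →ₗ[k] M := (TensorProduct.rid k M).toLinearMap ∘ₗ
    (mul' k k ∘ₗ TensorProduct.map f.ofConv g.ofConv).lTensor M with hcontract
  have hassoc : contract ∘ₗ (TensorProduct.assoc k M H H).toLinearMap =
      (TensorProduct.rid k M).toLinearMap ∘ₗ f.ofConv.lTensor M ∘ₗ
        (TensorProduct.rid k (M ⊗[k] H)).toLinearMap ∘ₗ g.ofConv.lTensor (M ⊗[k] H) := by
    ext m x y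
    simp [hcontract, mul_comm (f.ofConv x), mul_smul]
  have hcomm : ρ ∘ₗ (TensorProduct.rid k M).toLinearMap ∘ₗ g.ofConv.lTensor M =
      (TensorProduct.rid k (M ⊗[k] H)).toLinearMap ∘ₗ g.ofConv.lTensor (M ⊗[k] H) ∘ₗ
        TensorProduct.map ρ LinearMap.id := by
    ext m x
    simp
  have hconv : (f * g).ofConv.lTensor M =
      (mul' k k ∘ₗ TensorProduct.map f.ofConv g.ofConv).lTensor M ∘ₗ
        TensorProduct.map LinearMap.id Coalgebra.comul := by
    rw [← lTensor, ← lTensor_comp]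
    rfl
  ext m
  calc coactionEnd ρ (f * g) m
      = contract (TensorProduct.map LinearMap.id Coalgebra.comul (ρ m)) := by
        simp [coactionEnd, hconv, hcontract]
    _ = contract (TensorProduct.assoc k M H H (TensorProduct.map ρ LinearMap.id (ρ m))) := by
        rw [hρ.coassoc]
    _ = coactionEnd ρ f (coactionEnd ρ g m) :=
        (LinearMap.congr_fun hassoc _).trans <|
          congrArg ((TensorProduct.rid k M).toLinearMap ∘ₗ f.ofConv.lTensor M)
            (LinearMap.congr_fun hcomm (ρ m)).symm

end Coaction

section Points

variable {k H R : Type*} [CommSemiring k] [CommSemiring H] [CommSemiring R] [Algebra k R]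

/-- Evaluation `id ⊗ g : R ⊗ H → R` at a `k`-point `g : H → k`. -/
noncomputable def evalPoint [Algebra k H] (R : Type*) [CommSemiring R] [Algebra k R]
    (g : H →ₐ[k] k) : R ⊗[k] H →ₐ[k] R :=
  Algebra.TensorProduct.productMap (AlgHom.id k R) ((Algebra.ofId k R).comp g)

theorem evalPoint_tmul [Algebra k H] (g : H →ₐ[k] k) (r : R) (h : H) :
    evalPoint R g (r ⊗ₜ h) = g h • r := by
  simp [evalPoint, Algebra.ofId_apply, Algebra.smul_def, mul_comm]

theorem evalPoint_coaction [Bialgebra k H] (ρ : R →ₗ[k] R ⊗[k] H) (g : H →ₐ[k] k) (r : R) :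
    evalPoint R g (ρ r) = coactionEnd ρ (.toConv g.toLinearMap) r := by
  have : (evalPoint R g).toLinearMap =
      (TensorProduct.rid k R).toLinearMap ∘ₗ g.toLinearMap.lTensor R := by
    ext; simp [evalPoint_tmul]
  exact LinearMap.congr_fun this (ρ r)

theorem IsCoaction.evalPoint_surjective [HopfAlgebra k H] {ρ : R →ₗ[k] R ⊗[k] H}
    (hρ : IsCoaction ρ) (g : H →ₐ[k] k) : Function.Surjective fun r ↦ evalPoint R g (ρ r) := by
  set γ : WithConv (H →ₐ[k] k) := .toConv g
  have hinv : (WithConv.toConv g.toLinearMap * .toConv (γ⁻¹).ofConv.toLinearMap :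
      WithConv (H →ₗ[k] k)) = 1 := by
    rw [← AlgHom.toLinearMap_convOne, ← mul_inv_cancel γ, AlgHom.toLinearMap_convMul]
  refine fun r ↦ ⟨coactionEnd ρ (.toConv (γ⁻¹).ofConv.toLinearMap) r, ?_⟩
  simp only [evalPoint_coaction]
  rw [← Module.End.mul_apply, ← hρ.coactionEnd_mul, hinv, hρ.coactionEnd_one, Module.End.one_apply]

end Points

section TensorDerivation

variable {k R : Type*} [CommRing k] [CommRing R] [Algebra k R] (D : Derivation k R R)
  (H : Type*) [CommRing H] [Algebra k H]

theorem rTensor_leibniz (a b : R ⊗[k] H) :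
    D.toLinearMap.rTensor H (a * b) =
      a • D.toLinearMap.rTensor H b + b • D.toLinearMap.rTensor H a := by
  induction a using TensorProduct.induction_on with
  | zero => simp
  | add x y hx hy => simp only [add_mul, map_add, hx, hy, smul_eq_mul]; ring
  | tmul r x =>
    induction b using TensorProduct.induction_on with
    | zero => simp
    | add y z hy hz => simp only [mul_add, map_add, hy, hz, smul_eq_mul]; ring
    | tmul s y => simp [TensorProduct.add_tmul, mul_comm]

/-- The derivation `D ⊗ id` of `R ⊗ H`, which treats the elements of `H` as constants. -/
noncomputable def rTensorDerivation : Derivation k (R ⊗[k] H) (R ⊗[k] H) :=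
  .mk' (D.toLinearMap.rTensor H) (rTensor_leibniz D H)

variable {H} in
@[simp]
theorem rTensorDerivation_tmul (r : R) (h : H) : rTensorDerivation D H (r ⊗ₜ h) = D r ⊗ₜ h :=
  rfl

end TensorDerivation

section Torsor

theorem exists_algHom_algebraMap_eq {k A B : Type*} [Field k] [CommRing A] [Algebra k A]
    [CommRing B] [Nontrivial B] [Algebra k B] (φ : A →ₐ[k] B)
    (hφ : ∀ a, φ a ∈ (algebraMap k B).range) :
    ∃ g : A →ₐ[k] k, ∀ a, algebraMap k B (g a) = φ a := by
  refine ⟨(Algebra.botEquiv k B).toAlgHom.comp (φ.codRestrict ⊥ hφ), fun a ↦ ?_⟩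
  exact congrArg Subtype.val ((Algebra.botEquiv k B).symm_apply_apply (φ.codRestrict ⊥ hφ a))

theorem map_sup_map_ne_top_of_bijective {F A B T : Type*} [Field F] [CommRing A] [CommRing B]
    [CommRing T] [Algebra F A] [Algebra F B] [Algebra F T] {f : A →ₐ[F] T} {g : B →ₐ[F] T}
    (hbij : Function.Bijective (Algebra.TensorProduct.productMap f g)) {I : Ideal A} {J : Ideal B}
    (hI : I ≠ ⊤) (hJ : J ≠ ⊤) : I.map f ⊔ J.map g ≠ ⊤ := by
  have : Nontrivial (A ⧸ I) := Ideal.Quotient.nontrivial_iff.mpr hI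
  have : Nontrivial (B ⧸ J) := Ideal.Quotient.nontrivial_iff.mpr hJ
  set e := AlgEquiv.ofBijective _ hbij
  set χ : T →ₐ[F] (A ⧸ I) ⊗[F] (B ⧸ J) :=
    (Algebra.TensorProduct.map (Ideal.Quotient.mkₐ F I) (Ideal.Quotient.mkₐ F J)).comp
      e.symm.toAlgHom
  have hf (a : A) : e.symm (f a) = a ⊗ₜ 1 := by simp [e, AlgEquiv.symm_apply_eq]
  have hg (b : B) : e.symm (g b) = 1 ⊗ₜ b := by simp [e, AlgEquiv.symm_apply_eq]
  refine ne_top_of_le_ne_top (RingHom.ker_ne_top χ)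
    (sup_le (Ideal.map_le_iff_le_comap.mpr fun a ha ↦ ?_)
      (Ideal.map_le_iff_le_comap.mpr fun b hb ↦ ?_))
  · simp [χ, RingHom.mem_ker, hf, Ideal.Quotient.eq_zero_iff_mem.mpr ha]
  · simp [χ, RingHom.mem_ker, hg, Ideal.Quotient.eq_zero_iff_mem.mpr hb]

variable {k F : Type*} [Field k] [IsAlgClosed k] [Field F] [Algebra k F] {δ : Derivation ℤ F F}
  {H : Type*} [CommRing H] [Algebra k H] [Algebra.FiniteType k H] {R : Type*} [CommRing R]
  [Algebra F R] [Algebra.FiniteType F R] [Algebra k R] [IsScalarTower k F R] {D : Derivation k R R}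
  (hconst : ∀ x : F, δ x = 0 → x ∈ (algebraMap k F).range)
  (hext : ∀ a : F, D (algebraMap F R a) = algebraMap F R (δ a))

include hconst hext

theorem IsMaxDiffIdeal.exists_evalPoint_tmul_one_mem_iff {J : Ideal (R ⊗[k] H)}
    (hJ : IsMaxDiffIdeal (rTensorDerivation D H) J) :
    ∃ g : H →ₐ[k] k, ∀ t, evalPoint R g t ⊗ₜ 1 ∈ J ↔ t ∈ J := by
  have : Nontrivial ((R ⊗[k] H) ⧸ J) := Ideal.Quotient.nontrivial_iff.mpr hJ.1
  have : Algebra.FiniteType F (R ⊗[k] H) := .trans (S := R) inferInstance inferInstance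
  have hext' (a : F) : rTensorDerivation D H (algebraMap F _ a) = algebraMap F _ (δ a) := by
    simp [Algebra.TensorProduct.algebraMap_apply, hext]
  set π := Ideal.Quotient.mkₐ k J
  obtain ⟨g, hg⟩ := exists_algHom_algebraMap_eq (π.comp Algebra.TensorProduct.includeRight)
    fun h ↦ hJ.mk_constant_mem_range_algebraMap hconst hext' (by simp)
  have hπ : (π.comp Algebra.TensorProduct.includeLeft).comp (evalPoint R g) = π := by
    ext x
    · simp [evalPoint_tmul]
    · simpa [evalPoint_tmul, ← Algebra.algebraMap_eq_smul_one] using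
        (π.commutes (g x)).trans (hg x)
  refine ⟨g, fun t ↦ ?_⟩
  rw [← Ideal.Quotient.eq_zero_iff_mem, ← Ideal.Quotient.eq_zero_iff_mem]
  exact iff_of_eq (congrArg (· = 0) (AlgHom.congr_fun hπ t))

theorem IsMaxDiffIdeal.exists_comap_evalPoint_coaction_eq {ρ : R →ₐ[F] R ⊗[k] H}
    (hder : ∀ r, ρ (D r) = rTensorDerivation D H (ρ r))
    (htorsor : Function.Bijective (Algebra.TensorProduct.productMap
      (Algebra.TensorProduct.includeLeft : R →ₐ[F] R ⊗[k] H) ρ))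
    {𝔪 𝔪' : Ideal R} (h𝔪 : IsMaxDiffIdeal D 𝔪) (h𝔪' : IsMaxDiffIdeal D 𝔪') :
    ∃ g : H →ₐ[k] k, 𝔪'.comap ((evalPoint R g).toRingHom.comp ρ.toRingHom) = 𝔪 := by
  obtain ⟨J, hJ, hJ𝔪', hJ𝔪⟩ := h𝔪'.exists_comap_eq_comap_eq (d := rTensorDerivation D H)
    (f := Algebra.TensorProduct.includeLeftRingHom) (f' := ρ.toRingHom) (fun _ ↦ rfl) hder h𝔪
    (map_sup_map_ne_top_of_bijective htorsor h𝔪'.1 h𝔪.1)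
  obtain ⟨g, hg⟩ := hJ.exists_evalPoint_tmul_one_mem_iff hconst hext
  refine ⟨g, ?_⟩
  rw [← hJ𝔪, ← hJ𝔪']
  exact Ideal.ext fun r ↦ hg (ρ r)

end Torsor

/-- A bare derivation as a bundled `ℤ`-linear one. -/
def IsDerivationFun.toDerivation {R : Type*} [CommRing R] {δ : R → R} (hδ : IsDerivationFun δ) :
    Derivation ℤ R R :=
  .mk' (AddMonoidHom.mk' δ hδ.1).toIntLinearMap fun a b ↦ by
    simpa [mul_comm (δ a)] using hδ.2 a b

theorem maxDiffIdeals_conjugate_of_differential_torsor_general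
    {k F H R : Type*} [Field k] [IsAlgClosed k] [Field F] [Algebra k F] [CommRing H]
    [HopfAlgebra k H] [Algebra.FiniteType k H] [CommRing R] [Algebra F R] [Algebra.FiniteType F R]
    [Algebra k R] [IsScalarTower k F R] {δ : Derivation ℤ F F}
    (hconst : ∀ x : F, δ x = 0 → x ∈ (algebraMap k F).range) {D : Derivation k R R}
    (hext : ∀ a : F, D (algebraMap F R a) = algebraMap F R (δ a)) {ρ : R →ₐ[F] R ⊗[k] H}
    (hρ : IsCoaction (ρ.toLinearMap.restrictScalars k))
    (hder : ∀ r, ρ (D r) = rTensorDerivation D H (ρ r))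
    (htorsor : Function.Bijective (Algebra.TensorProduct.productMap
      (Algebra.TensorProduct.includeLeft : R →ₐ[F] R ⊗[k] H) ρ))
    {𝔪 𝔪' : Ideal R} (h𝔪 : IsMaxDiffIdeal D 𝔪) (h𝔪' : IsMaxDiffIdeal D 𝔪') :
    ∃ g : H →ₐ[k] k, 𝔪' = 𝔪.map ((evalPoint R g).toRingHom.comp ρ.toRingHom) := by
  obtain ⟨g, rfl⟩ := h𝔪.exists_comap_evalPoint_coaction_eq hconst hext hder htorsor h𝔪'
  exact ⟨g, (Ideal.map_comap_of_surjective _ (hρ.evalPoint_surjective g) 𝔪').symm⟩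

/-- **Maximal differential ideals of a differential torsor are conjugate under `G(k)`.**
Let `k` be an algebraically closed field of characteristic zero, `F` a differential field with
field of constants exactly `k`, and `H` a finitely generated commutative Hopf algebra over `k`
(the coordinate ring of an affine algebraic group `G` over `k`).  Let `R` be a differential
`F`-algebra that is an integral domain and finitely generated as an `F`-algebra, whose
derivation `D` extends that of `F` (`D` is `k`-linear automatically, and is bundled here as a
`k`-linear map), equipped with a differential torsor structure: an `F`-algebra homomorphism
`ρ : R → R ⊗_k H` satisfying the comodule axioms, compatible with the derivation, and such
that `R ⊗_F R → R ⊗_k H, a ⊗ b ↦ (a ⊗ 1)·ρ(b)` is bijective.  For a `k`-algebra homomorphism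
`g : H → k` (a `k`-point of `G`), the corresponding differential `F`-algebra automorphism of
`R` is `(id_R ⊗ g) ∘ ρ`.  Then for any two maximal differential ideals `𝔪` and `𝔪'` of `R`
there exists `g : H →ₐ[k] k` with `𝔪'` equal to the image of `𝔪` under this automorphism. -/
theorem maxDiffIdeals_conjugate_of_differential_torsor
    (k : Type*) [Field k] [IsAlgClosed k] [CharZero k]
    (F : Type*) [Field F] [Algebra k F]
    (δF : F → F) (hδF : IsDerivationFun δF)
    -- the field of constants of `F` is exactly `k`
    (hconst : ∀ x : F, δF x = 0 ↔ x ∈ Set.range (algebraMap k F))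
    (H : Type*) [CommRing H] [HopfAlgebra k H] [Algebra.FiniteType k H]
    (R : Type*) [CommRing R] [IsDomain R] [Algebra F R] [Algebra.FiniteType F R]
    [Algebra k R] [IsScalarTower k F R]
    -- the derivation `D` of `R` extending `δF`
    (D : R →ₗ[k] R)
    (hLeib : ∀ a b : R, D (a * b) = a * D b + D a * b)
    (hext : ∀ a : F, D (algebraMap F R a) = algebraMap F R (δF a))
    -- the coaction `ρ`, an `F`-algebra homomorphism, with its `k`-linear realization `ρₖ`
    (ρ : R →ₐ[F] R ⊗[k] H)
    (ρₖ : R →ₗ[k] R ⊗[k] H) (hρₖ : ∀ r : R, ρₖ r = ρ r)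
    -- comodule axioms
    (hcoassoc : ∀ r : R,
      (TensorProduct.assoc k R H H)
          ((TensorProduct.map ρₖ (LinearMap.id : H →ₗ[k] H)) (ρ r)) =
        (TensorProduct.map (LinearMap.id : R →ₗ[k] R) Coalgebra.comul) (ρ r))
    (hcounit : ∀ r : R,
      (TensorProduct.map (LinearMap.id : R →ₗ[k] R) (Coalgebra.counit (R := k) (A := H)))
          (ρ r) = r ⊗ₜ[k] (1 : k))
    -- compatibility with the derivation (`H` consists of constants)
    (hder : ∀ r : R, ρ (D r) = (TensorProduct.map D (LinearMap.id : H →ₗ[k] H)) (ρ r))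
    -- the torsor condition
    (htorsor : Function.Bijective
      (Algebra.TensorProduct.productMap
        (Algebra.TensorProduct.includeLeft : R →ₐ[F] R ⊗[k] H) ρ)) :
    ∀ 𝔪 𝔪' : Ideal R, IsMaxDiffIdeal (⇑D) 𝔪 → IsMaxDiffIdeal (⇑D) 𝔪' →
      ∃ g : H →ₐ[k] k,
        𝔪' = Ideal.map
          ((Algebra.TensorProduct.productMap (AlgHom.id k R)
              ((Algebra.ofId k R).comp g)).toRingHom.comp ρ.toRingHom) 𝔪 := by
  intro 𝔪 𝔪' h𝔪 h𝔪'
  obtain rfl : ρₖ = ρ.toLinearMap.restrictScalars k := LinearMap.ext hρₖ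
  exact maxDiffIdeals_conjugate_of_differential_torsor_general (δ := hδF.toDerivation)
    (fun x ↦ (hconst x).mp) (D := .mk' D fun a b ↦ by simpa [mul_comm b] using hLeib a b)
    hext ⟨hcoassoc, hcounit⟩ hder htorsor h𝔪 h𝔪'
end

section
/- Let k be an algebraically closed field of characteristic zero, B a finitely generated k-algebra that is an integral domain, and Γ a finitely generated subgroup of the additive group (B,+). Then the ad-open set {c ∈ Hom_{k-alg}(B,k) : c is injective on Γ} is Zariski dense in Hom_{k-alg}(B,k); that is, for every nonzero b ∈ B there exists a k-algebra homomorphism c : B → k with c(b) ≠ 0 and with c injective on Γ. -/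
/-!
By Noether normalization `B` is integral over a polynomial ring `A = k[X₀, …, Xₙ₋₁]`. The generic
linear combination of generators of `Γ` satisfies a monic equation; specializing it gives, for every
`v` in the `ℚ`-span `V` of `Γ`, a monic equation over `A` whose coefficients lie in a single
finitely generated `ℚ`-subspace `W` of `A`. If `c` kills `v ≠ 0` then, `B` being a domain, `c` kills
the lowest nonzero coefficient of that equation. So it suffices to find a point of `A` injective on
`W` and to extend it to `B`.

The elements of `W` have coefficients in a finitely generated field `K` and degree at most some `D`.
As `k` is not finitely generated over `ℚ`, it contains an element `a` of degree at least
`(D + 1) ^ n` over `K`, and the Kronecker substitution `Xᵢ ↦ a ^ (D + 1) ^ i` is injective on `W`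
because it sends the monomials that can occur to distinct powers `a ^ j` with `j < (D + 1) ^ n`.

That `k` is not finitely generated is seen on its purely transcendental part: if `R` is factorial
and `k` is finite of degree `d` over `Frac R`, a `(d + 1)`-st root in `k` of a prime `π` of `R` has
norm `r ∈ R` with `r ^ (d + 1) = π ^ d`, which is absurd.
-/

section NotFinitelyGenerated

theorem not_finite_of_prime {R F L : Type*} [CommRing R] [IsDomain R] [IsIntegrallyClosed R]
    [Field F] [Algebra R F] [IsFractionRing R F] [Field L] [IsAlgClosed L] [Algebra F L]
    {π : R} (hπ : Prime π) : ¬ Module.Finite F L := by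
  intro _
  set d := Module.finrank F L
  obtain ⟨α, hα⟩ := IsAlgClosed.exists_pow_nat_eq (algebraMap F L (algebraMap R F π)) d.succ_pos
  have hnorm : Algebra.norm F α ^ (d + 1) = algebraMap R F (π ^ d) := by
    rw [← map_pow, hα, Algebra.norm_algebraMap, map_pow]
  obtain ⟨r, hr⟩ := IsIntegrallyClosed.exists_algebraMap_eq_of_isIntegral_pow d.succ_pos
    (hnorm ▸ isIntegral_algebraMap)
  have hrπ : r ^ (d + 1) = π ^ d := IsFractionRing.injective R F (by rw [map_pow, hr, hnorm])
  have hd : d ≠ 0 := Module.finrank_pos.ne'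
  obtain ⟨s, rfl⟩ : π ∣ r := hπ.dvd_of_dvd_pow (hrπ ▸ dvd_pow_self π hd)
  have hdvd : π ^ (d + 1) ∣ π ^ d := hrπ ▸ mul_pow π s (d + 1) ▸ dvd_mul_right _ _
  exact absurd ((pow_dvd_pow_iff hπ.ne_zero hπ.not_isUnit).mp hdvd) (by lia)

theorem not_essFiniteType_int (L : Type*) [Field L] [IsAlgClosed L] [CharZero L] :
    ¬ Algebra.EssFiniteType ℤ L := by
  intro _
  obtain ⟨s, hs⟩ := exists_isTranscendenceBasis ℤ L
  let R := Algebra.adjoin ℤ (Set.range ((↑) : s → L))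
  let e : MvPolynomial s ℤ ≃ₐ[ℤ] R := hs.1.aevalEquiv
  have : UniqueFactorizationMonoid R := e.toMulEquiv.uniqueFactorizationMonoid inferInstance
  have htwo : Prime (e (MvPolynomial.C 2)) :=
    (MulEquiv.prime_iff e).mpr ((MvPolynomial.prime_C_iff _).mpr Int.prime_two)
  let _ := FractionRing.liftAlgebra R L
  have := FractionRing.isScalarTower_liftAlgebra R L
  have : Algebra.IsAlgebraic (FractionRing R) L :=
    (IsFractionRing.comap_isAlgebraic_iff (A := R)).mp hs.isAlgebraic
  have : Algebra.EssFiniteType (FractionRing R) L := .of_comp ℤ _ _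
  exact not_finite_of_prime (F := FractionRing R) (L := L) htwo
    Algebra.finite_of_essFiniteType_of_isAlgebraic

theorem not_essFiniteType_rat (L : Type*) [Field L] [IsAlgClosed L] [CharZero L] :
    ¬ Algebra.EssFiniteType ℚ L := by
  intro _
  have : Algebra.EssFiniteType ℤ ℚ := .of_isLocalization _ (nonZeroDivisors ℤ)
  exact not_essFiniteType_int L (.comp ℤ ℚ L)

end NotFinitelyGenerated

section PolynomialRing

open MvPolynomial

theorem exists_linearIndependent_pow {K L : Type*} [Field K] [PerfectField K] [Field L]
    [Algebra K L] (hL : ¬ FiniteDimensional K L) (D : ℕ) :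
    ∃ a : L, LinearIndependent K fun i : Fin D ↦ a ^ (i : ℕ) := by
  by_cases hK : Algebra.IsAlgebraic K L
  · obtain ⟨M, _, hDM⟩ := IntermediateField.exists_lt_finrank_of_infinite_dimensional hL D
    obtain ⟨α, hα⟩ := Field.exists_primitive_element K M
    have hdeg : D ≤ (minpoly K α).natDegree :=
      (Field.primitive_element_iff_minpoly_natDegree_eq K α).mp hα ▸ hDM.le
    have hα' := (linearIndependent_pow α).comp (Fin.castLE hdeg) (Fin.castLE_injective hdeg)
    exact ⟨α, hα'.map' M.val.toLinearMap (LinearMap.ker_eq_bot.mpr M.val.injective)⟩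
  · obtain ⟨a, ha⟩ := Algebra.transcendental_iff_not_isAlgebraic.mpr hK
    have hpow := (Polynomial.basisMonomials K).linearIndependent.map'
      (Polynomial.aeval a).toLinearMap
      (LinearMap.ker_eq_bot.mpr (transcendental_iff_injective.mp ha))
    exact ⟨a, by simpa [Function.comp_def] using hpow.comp _ (Fin.val_injective (n := D))⟩

theorem linearIndepOn_prod_pow_pow {R S : Type*} [CommRing R] [CommRing S] [Algebra R S]
    {n D : ℕ} {a : S} (ha : LinearIndependent R fun i : Fin (D ^ n) ↦ a ^ (i : ℕ)) :
    LinearIndepOn R (fun m : Fin n →₀ ℕ ↦ ∏ i : Fin n, (a ^ D ^ (i : ℕ)) ^ m i)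
      {m | ∀ i, m i < D} := by
  let digits (m : {m : Fin n →₀ ℕ | ∀ i, m i < D}) : Fin n → Fin D := fun i ↦ ⟨m.1 i, m.2 i⟩
  have hdigits : Function.Injective digits := fun m m' h ↦
    Subtype.ext (Finsupp.ext fun i ↦ congrArg Fin.val (congrFun h i))
  rw [LinearIndepOn]
  convert ha.comp _ (finFunctionFinEquiv.injective.comp hdigits) with m
  simp [digits, ← pow_mul, Finset.prod_pow_eq_pow_sum, mul_comm]

theorem eq_zero_of_mem_restrictDegree_of_aeval_pow_pow_eq_zero {R S : Type*} [CommRing R]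
    [CommRing S] [Algebra R S] {n D : ℕ} {a : S}
    (ha : LinearIndependent R fun i : Fin ((D + 1) ^ n) ↦ a ^ (i : ℕ))
    {p : MvPolynomial (Fin n) R} (hp : p ∈ restrictDegree (Fin n) R D)
    (h : aeval (fun i : Fin n ↦ a ^ (D + 1) ^ (i : ℕ)) p = 0) : p = 0 := by
  have hsum : ∑ m ∈ p.support, p.coeff m • ∏ i : Fin n, (a ^ (D + 1) ^ (i : ℕ)) ^ m i = 0 := by
    simpa only [Algebra.smul_def, aeval_def, eval₂_eq'] using h
  have hsupp : (p.support : Set (Fin n →₀ ℕ)) ⊆ {m | ∀ i, m i < D + 1} := fun m hm i ↦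
    Nat.lt_succ_of_le ((mem_restrictDegree _ _ _).mp hp m hm i)
  have hind := linearIndepOn_prod_pow_pow (D := D + 1) ha
  have hcoeff := linearIndepOn_iff'.mp hind p.support p.coeff hsupp hsum
  ext m
  by_cases hm : m ∈ p.support
  · exact hcoeff m hm
  · exact notMem_support_iff.mp hm

theorem exists_essFiniteType_map_restrictDegree_of_fg {E k σ : Type*} [Field E] [Field k]
    [Algebra E k] {V : Submodule E (MvPolynomial σ k)} (hV : V.FG) :
    ∃ (K : IntermediateField E k) (D : ℕ), Algebra.EssFiniteType E K ∧
      ∀ p ∈ V, ∃ q ∈ restrictDegree σ K D, map (algebraMap K k) q = p := by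
  classical
  obtain ⟨S, rfl⟩ := hV
  let K := IntermediateField.adjoin E (S.biUnion coeffs : Set k)
  let D := S.sup totalDegree
  have hle : Submodule.span E S ≤ (mapAlgHom (σ := σ) K.val).range.toSubmodule ⊓
      (restrictTotalDegree σ k D).restrictScalars E := by
    refine Submodule.span_le.mpr fun s hs ↦ ⟨?_, ?_⟩
    · exact mem_range_map_iff_coeffs_subset.mpr fun x hx ↦
        ⟨⟨x, IntermediateField.subset_adjoin E _ (Finset.mem_biUnion.mpr ⟨s, hs, hx⟩)⟩, rfl⟩
    · exact (mem_restrictTotalDegree _ _ _).mpr (Finset.le_sup hs)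
  refine ⟨K, D, IntermediateField.essFiniteType_iff.mpr (IntermediateField.fg_adjoin_finset _),
    fun p hp ↦ ?_⟩
  obtain ⟨⟨q, rfl⟩, hqD⟩ := hle hp
  refine ⟨q, (mem_restrictDegree _ _ _).mpr ?_, rfl⟩
  have hmap := (mem_restrictDegree _ _ _).mp (restrictTotalDegree_le_restrictDegree σ k D hqD)
  exact support_map_of_injective q (algebraMap K k).injective ▸ hmap

theorem exists_algHom_mvPolynomial_of_fg {E k L : Type*} [Field E] [CharZero E] [Field k]
    [Field L] [Algebra E k] [Algebra k L] [Algebra E L] [IsScalarTower E k L]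
    (hL : ¬ Algebra.EssFiniteType E L) {n : ℕ}
    {V : Submodule E (MvPolynomial (Fin n) k)} (hV : V.FG) :
    ∃ φ : MvPolynomial (Fin n) k →ₐ[k] L, ∀ p ∈ V, φ p = 0 → p = 0 := by
  obtain ⟨K, D, hK, hVK⟩ := exists_essFiniteType_map_restrictDegree_of_fg hV
  have := charZero_of_injective_algebraMap (algebraMap E K).injective
  have hKL : ¬ FiniteDimensional K L := fun _ ↦ hL (.comp E K L)
  obtain ⟨a, ha⟩ := exists_linearIndependent_pow hKL ((D + 1) ^ n)
  refine ⟨aeval fun i ↦ a ^ (D + 1) ^ (i : ℕ), fun p hp h ↦ ?_⟩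
  obtain ⟨q, hq, rfl⟩ := hVK p hp
  rw [aeval_map_algebraMap] at h
  rw [eq_zero_of_mem_restrictDegree_of_aeval_pow_pow_eq_zero ha hq h, map_zero]

end PolynomialRing

section Integral

theorem exists_fg_forall_eval_coeff_mem {E A σ : Type*} [CommRing E] [CommRing A] [Algebra E A]
    (p : Polynomial (MvPolynomial σ A)) :
    ∃ W : Submodule E A, W.FG ∧
      ∀ (z : σ → E) (i : ℕ), MvPolynomial.eval (algebraMap E A ∘ z) (p.coeff i) ∈ W := by
  classical
  refine ⟨.span E ↑(p.coeffs.biUnion MvPolynomial.coeffs), ⟨_, rfl⟩, fun z i ↦ ?_⟩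
  rw [MvPolynomial.eval_eq]
  refine sum_mem fun m hm ↦ ?_
  have hmem : (p.coeff i).coeff m ∈ p.coeffs.biUnion MvPolynomial.coeffs :=
    Finset.mem_biUnion.mpr ⟨_, Polynomial.coeff_mem_coeffs fun h ↦ by simp [h] at hm,
      MvPolynomial.coeff_mem_coeffs _ (MvPolynomial.mem_support_iff.mp hm)⟩
  simpa only [Algebra.smul_def, map_prod, map_pow, Function.comp_apply, mul_comm] using
    Submodule.smul_mem _ (∏ j ∈ m.support, z j ^ m j) (Submodule.subset_span hmem)

attribute [local instance] MvPolynomial.algebraMvPolynomial in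
theorem exists_fg_forall_exists_monic_coeff_mem {E B : Type*} (A : Type*) [CommRing E]
    [CommRing A] [CommRing B] [Algebra E A] [Algebra E B] [Algebra A B] [IsScalarTower E A B]
    [Algebra.IsIntegral A B] {V : Submodule E B} (hV : V.FG) :
    ∃ W : Submodule E A, W.FG ∧ ∀ v ∈ V, ∃ p : Polynomial A,
      p.Monic ∧ (∀ i, p.coeff i ∈ W) ∧ Polynomial.aeval v p = 0 := by
  obtain ⟨n, b, rfl⟩ := Submodule.fg_iff_exists_fin_generating_family.mp hV
  let u : MvPolynomial (Fin n) B := ∑ j, MvPolynomial.C (b j) * MvPolynomial.X j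
  obtain ⟨p, hp, hpu⟩ : IsIntegral (MvPolynomial (Fin n) A) u :=
    MvPolynomial.isIntegral_iff_isIntegral_coeff.mpr fun _ ↦ Algebra.IsIntegral.isIntegral _
  obtain ⟨W, hW, hpW⟩ := exists_fg_forall_eval_coeff_mem (E := E) p
  refine ⟨W, hW, fun v hv ↦ ?_⟩
  obtain ⟨z, rfl⟩ := (Submodule.mem_span_range_iff_exists_fun E).mp hv
  let evA := MvPolynomial.eval (algebraMap E A ∘ z)
  let evB := MvPolynomial.eval (algebraMap E B ∘ z)
  have hcomm : evB.comp (algebraMap (MvPolynomial (Fin n) A) (MvPolynomial (Fin n) B)) =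
      (algebraMap A B).comp evA := by
    rw [MvPolynomial.algebraMap_def]
    ext <;> simp [evA, evB, ← IsScalarTower.algebraMap_apply]
  have hu : evB u = ∑ j, z j • b j := by simp [evB, u, Algebra.smul_def, mul_comm]
  refine ⟨p.map evA, hp.map evA, fun i ↦ ?_, ?_⟩
  · rw [Polynomial.coeff_map]
    exact hpW z i
  · rw [← hu, Polynomial.aeval_def, Polynomial.eval₂_map, ← hcomm, ← Polynomial.hom_eval₂, hpu,
      map_zero]

theorem exists_fg_forall_ideal_of_isIntegral {E B : Type*} (A : Type*) [CommRing E] [CommRing A]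
    [CommRing B] [IsDomain B] [Algebra E A] [Algebra E B] [Algebra A B] [IsScalarTower E A B]
    [Algebra.IsIntegral A B] {V : Submodule E B} (hV : V.FG) :
    ∃ W : Submodule E A, W.FG ∧ ∀ I : Ideal B,
      (∀ w ∈ W, algebraMap A B w ∈ I → w = 0) → ∀ v ∈ V, v ∈ I → v = 0 := by
  have := (algebraMap A B).domain_nontrivial
  obtain ⟨W, hW, hVW⟩ := exists_fg_forall_exists_monic_coeff_mem A hV
  refine ⟨W, hW, fun I hI v hv hvI ↦ ?_⟩
  obtain ⟨p, hp, hpW, hpv⟩ := hVW v hv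
  by_contra hv0
  obtain ⟨i, hi, hiI⟩ :=
    Ideal.exists_coeff_ne_zero_mem_comap_of_root_mem hv0 hvI hp.ne_zero hpv
  exact hi (hI _ (hpW i) hiI)

theorem nonempty_algHom_of_isIntegral (A B L : Type*) [CommRing A] [CommRing B] [Field L]
    [IsAlgClosed L] [Algebra A B] [FaithfulSMul A B] [Algebra.IsIntegral A B] [Algebra A L] :
    Nonempty (B →ₐ[A] L) := by
  let P := RingHom.ker (algebraMap A L)
  have : P.IsPrime := RingHom.ker_isPrime _
  obtain ⟨Q, _, _⟩ : Nonempty (P.primesOver B) := inferInstance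
  let _ : Algebra (A ⧸ P) L := (RingHom.kerLift (algebraMap A L)).toAlgebra
  have : IsScalarTower A (A ⧸ P) L := .of_algebraMap_eq fun _ ↦ rfl
  have : Module.IsTorsionFree (A ⧸ P) L :=
    Module.isTorsionFree_iff_algebraMap_injective.mpr (RingHom.kerLift_injective _)
  have : Module.IsTorsionFree (A ⧸ P) (B ⧸ Q) :=
    Module.isTorsionFree_iff_faithfulSMul.mpr inferInstance
  let c : B ⧸ Q →ₐ[A ⧸ P] L := IsAlgClosed.lift
  exact ⟨(c.restrictScalars A).comp (Ideal.Quotient.mkₐ A Q)⟩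

end Integral

section Density

variable {E k L B : Type*} [Field E] [CharZero E] [Field k] [Field L] [IsAlgClosed L]
  [Algebra E k] [Algebra k L] [Algebra E L] [IsScalarTower E k L]
  [CommRing B] [IsDomain B] [Algebra k B] [Algebra.FiniteType k B] [Algebra E B]
  [IsScalarTower E k B]

theorem exists_algHom_injOn_of_fg (hL : ¬ Algebra.EssFiniteType E L) {V : Submodule E B}
    (hV : V.FG) : ∃ c : B →ₐ[k] L, Set.InjOn c (V : Set B) := by
  obtain ⟨n, g, hg, hgint⟩ := exists_integral_inj_algHom_of_fg k B
  let A := MvPolynomial (Fin n) k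
  let _ : Algebra A B := g.toAlgebra
  have : IsScalarTower k A B := .of_algebraMap_eq fun x ↦ (g.commutes x).symm
  have : IsScalarTower E A B := .to₁₃₄ E k A B
  have : Algebra.IsIntegral A B := ⟨hgint⟩
  have : FaithfulSMul A B := (faithfulSMul_iff_algebraMap_injective A B).mpr hg
  obtain ⟨W, hW, hWV⟩ := exists_fg_forall_ideal_of_isIntegral A hV
  obtain ⟨φ, hφ⟩ := exists_algHom_mvPolynomial_of_fg hL hW
  let _ : Algebra A L := φ.toAlgebra
  have : IsScalarTower k A L := .of_algebraMap_eq fun x ↦ (φ.commutes x).symm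
  obtain ⟨c⟩ := nonempty_algHom_of_isIntegral A B L
  have hcV : ∀ v ∈ V, c v = 0 → v = 0 :=
    hWV (RingHom.ker c) fun w hw hcw ↦ hφ w hw ((c.commutes w).symm.trans hcw)
  exact ⟨c.restrictScalars k, fun x hx y hy h ↦
    sub_eq_zero.mp (hcV _ (sub_mem hx hy) (by rw [map_sub, sub_eq_zero]; exact h))⟩

theorem adOpen_zariski_dense_general (hL : ¬ Algebra.EssFiniteType E L) {V : Submodule E B}
    (hV : V.FG) {b : B} (hb : b ≠ 0) :
    ∃ c : B →ₐ[k] L, c b ≠ 0 ∧ Set.InjOn c (V : Set B) := by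
  obtain ⟨c, hc⟩ := exists_algHom_injOn_of_fg (k := k) hL (hV.sup (Submodule.fg_span_singleton b))
  have hbV : b ∈ V ⊔ Submodule.span E {b} :=
    Submodule.mem_sup_right (Submodule.mem_span_singleton_self b)
  exact ⟨c, fun hcb ↦ hb (hc hbV (zero_mem _) (hcb.trans (map_zero c).symm)),
    hc.mono (SetLike.coe_subset_coe.mpr le_sup_left)⟩

end Density

/-- **Density of ad-open sets.**
Let `k` be an algebraically closed field of characteristic zero, `B` a finitely generated
`k`-algebra that is an integral domain, and `Γ` a finitely generated subgroup of the additive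
group `(B,+)`.  Then the ad-open set `{c ∈ Hom_{k-alg}(B,k) : c is injective on Γ}` is Zariski
dense in `Hom_{k-alg}(B,k)`; that is, for every nonzero `b ∈ B` there exists a `k`-algebra
homomorphism `c : B → k` with `c b ≠ 0` and with `c` injective on `Γ`. -/
theorem adOpen_zariski_dense
    (k : Type*) [Field k] [IsAlgClosed k] [CharZero k]
    (B : Type*) [CommRing B] [IsDomain B] [Algebra k B] [Algebra.FiniteType k B]
    (Γ : AddSubgroup B) (hΓ : Γ.FG)
    (b : B) (hb : b ≠ 0) :
    ∃ c : B →ₐ[k] k, c b ≠ 0 ∧ Set.InjOn c (Γ : Set B) := by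
  let _ : Algebra ℚ B := Algebra.compHom B (algebraMap ℚ k)
  have : IsScalarTower ℚ k B := .of_algebraMap_eq fun _ ↦ rfl
  obtain ⟨S, rfl⟩ := hΓ
  obtain ⟨c, hcb, hc⟩ := adOpen_zariski_dense_general (k := k) (not_essFiniteType_rat k)
    (Submodule.fg_span (R := ℚ) S.finite_toSet) hb
  have hle : AddSubgroup.closure (S : Set B) ≤ (Submodule.span ℚ (S : Set B)).toAddSubgroup :=
    (AddSubgroup.closure_le _).mpr Submodule.subset_span
  exact ⟨c, hcb, hc.mono hle⟩
end
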